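/- arXiv:1903.03197 — 2 statements merged into one kernel-verified Lean document; each statement's English description precedes it below -/
import Mathlib

section
/- Let g ≥ 9 and let G be a minimal well-indumatched graph of girth g, i.e., G is well-indumatched of girth g and no proper subgraph of G is a well-indumatched graph of girth g. Then G is a reduced unicyclic graph, and if C = v1 v2 ... vg v1 is the unique cycle of G, then for every i the rooted tree T_{v_i} is of Type (i) or of Type (ii). -/
open SimpleGraph

/-- `M` is an induced matching of `G`: a set of edges of `G` such that no two distinct
edges of `M` share an endpoint or have endpoints joined by an edge of `G`. -/
def IsInducedMatching {V : Type*} (G : SimpleGraph V) (M : Set (Sym2 V)) : Prop :=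
  M ⊆ G.edgeSet ∧
    ∀ e ∈ M, ∀ f ∈ M, e ≠ f → ∀ u ∈ e, ∀ v ∈ f, u ≠ v ∧ ¬ G.Adj u v

/-- `M` is a maximal induced matching of `G`. -/
def IsMaximalInducedMatching {V : Type*} (G : SimpleGraph V) (M : Set (Sym2 V)) : Prop :=
  IsInducedMatching G M ∧
    ∀ N : Set (Sym2 V), IsInducedMatching G N → M ⊆ N → N = M

/-- `G` is well-indumatched: all of its maximal induced matchings have the same size. -/
def WellIndumatched {V : Type*} (G : SimpleGraph V) : Prop :=
  ∀ M N : Set (Sym2 V), IsMaximalInducedMatching G M → IsMaximalInducedMatching G N →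
    M.ncard = N.ncard

/-- A graph is reduced if no two distinct vertices have the same open neighborhood. -/
def Reduced {V : Type*} (G : SimpleGraph V) : Prop :=
  ∀ x y : V, G.neighborSet x = G.neighborSet y → x = y

/-- The component of `v` in `H` is of Type (i): it consists of the single vertex `v`. -/
def TypeI {V : Type*} (H : SimpleGraph V) (v : V) : Prop :=
  (H.connectedComponentMk v).supp = {v}

/-- The component of `v` in `H` is of Type (ii): it is a path of length `2` having `v`
as an endpoint. -/
def TypeII {V : Type*} (H : SimpleGraph V) (v : V) : Prop :=
  ∃ x y : V, x ≠ y ∧ v ≠ x ∧ v ≠ y ∧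
    (H.connectedComponentMk v).supp = {v, x, y} ∧
    H.Adj v x ∧ H.Adj x y ∧ ¬ H.Adj v y

/-!
Let `S` be the vertex set of a shortest cycle. An induced subgraph containing `S` still has girth
`g`, so by minimality it is not well-indumatched unless it is all of `G`. On the other hand,
well-indumatchedness survives the deletion of everything dominated by an edge far from `S`, and of
a vertex `b` each of whose edges can be traded for an edge avoiding `b`. Hence every edge lies close
to `S`, twins outside `S` do not exist, and large girth leaves only three possibilities at a vertex
of `S`: nothing, one leaf, or one path of length two hangs there.

A single leaf is impossible. If a maximal induced matching contains `e`, then after removing `e` one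
cannot add two edges that are far apart from each other. Applied to edges `e` of the cycle, this
makes leaves reappear at every third vertex of the cycle, with two vertices of degree two between
consecutive ones, and then an edge of the cycle can be traded for the two leaf edges next to it. For
`g = 10`, going around the cycle puts two leaves at distance two instead, which is impossible as
well.
-/

section InducedMatchings

variable {V W : Type*} {G : SimpleGraph V} {H : SimpleGraph W}

/-- The vertex pairs `e` and `f` are far apart in `G`: they share no vertex and no edge of `G`
joins them. Two distinct edges may lie in a common induced matching iff they are far apart. -/
def FarApart (G : SimpleGraph V) (e f : Sym2 V) : Prop :=
  ∀ u ∈ e, ∀ v ∈ f, u ≠ v ∧ ¬ G.Adj u v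

namespace FarApart

theorem symm {e f : Sym2 V} (h : FarApart G e f) : FarApart G f e :=
  fun u hu v hv => ⟨(h v hv u hu).1.symm, fun ha => (h v hv u hu).2 ha.symm⟩

theorem irrefl (e : Sym2 V) : ¬ FarApart G e e := by
  induction e with | _ a b
  exact fun h => (h a (Sym2.mem_mk_left a b) a (Sym2.mem_mk_left a b)).1 rfl

theorem mk_iff {a b : V} {e : Sym2 V} :
    FarApart G s(a, b) e ↔ ∀ v ∈ e, (a ≠ v ∧ ¬ G.Adj a v) ∧ (b ≠ v ∧ ¬ G.Adj b v) := by
  simp only [FarApart, Sym2.mem_iff, forall_eq_or_imp, forall_eq, ← forall_and]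

theorem mk_mk_iff {a b c d : V} :
    FarApart G s(a, b) s(c, d) ↔
      ((a ≠ c ∧ ¬ G.Adj a c) ∧ (b ≠ c ∧ ¬ G.Adj b c)) ∧
        ((a ≠ d ∧ ¬ G.Adj a d) ∧ (b ≠ d ∧ ¬ G.Adj b d)) := by
  simp only [mk_iff, Sym2.mem_iff, forall_eq_or_imp, forall_eq]

theorem map_iff (f : H ↪g G) {e e' : Sym2 W} :
    FarApart G (e.map f) (e'.map f) ↔ FarApart H e e' := by
  simp only [FarApart, Sym2.mem_map, forall_exists_index, and_imp, forall_apply_eq_imp_iff₂,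
    ne_eq, f.injective.eq_iff, f.map_adj_iff]

end FarApart

namespace IsInducedMatching

variable {M : Set (Sym2 V)}

theorem mono {N : Set (Sym2 V)} (hM : IsInducedMatching G M) (hNM : N ⊆ M) :
    IsInducedMatching G N :=
  ⟨hNM.trans hM.1, fun e he f hf => hM.2 e (hNM he) f (hNM hf)⟩

theorem empty : IsInducedMatching G ∅ :=
  ⟨Set.empty_subset _, fun _ he => he.elim⟩

theorem union {N : Set (Sym2 V)} (hM : IsInducedMatching G M) (hN : IsInducedMatching G N)
    (hMN : ∀ e ∈ M, ∀ f ∈ N, FarApart G e f) : IsInducedMatching G (M ∪ N) := by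
  refine ⟨Set.union_subset hM.1 hN.1, ?_⟩
  rintro e (he | he) f (hf | hf) hef
  · exact hM.2 e he f hf hef
  · exact hMN e he f hf
  · exact (hMN f hf e he).symm
  · exact hN.2 e he f hf hef

theorem singleton {e : Sym2 V} (he : e ∈ G.edgeSet) : IsInducedMatching G {e} := by
  refine ⟨Set.singleton_subset_iff.2 he, ?_⟩
  rintro _ rfl _ rfl h
  exact absurd rfl h

theorem insert (hM : IsInducedMatching G M) {e : Sym2 V} (he : e ∈ G.edgeSet)
    (hfar : ∀ m ∈ M, FarApart G e m) : IsInducedMatching G (insert e M) := by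
  refine (singleton he).union hM ?_
  rintro _ rfl
  exact hfar

theorem image (hM : IsInducedMatching G M) {W : Type*} {H : SimpleGraph W} (f : G ↪g H) :
    IsInducedMatching H (Sym2.map f '' M) := by
  refine ⟨?_, ?_⟩
  · rintro _ ⟨e, he, rfl⟩
    exact f.map_mem_edgeSet_iff.2 (hM.1 he)
  · rintro _ ⟨e, he, rfl⟩ _ ⟨e', he', rfl⟩ hne
    exact (FarApart.map_iff f).2 (hM.2 e he e' he' (fun h => hne (h ▸ rfl)))

theorem exists_maximal [Finite V] (hM : IsInducedMatching G M) :
    ∃ N, M ⊆ N ∧ IsMaximalInducedMatching G N := by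
  obtain ⟨N, hMN, hN⟩ :=
    (Set.toFinite {N : Set (Sym2 V) | IsInducedMatching G N}).exists_le_maximal hM
  exact ⟨N, hMN, hN.prop, fun N' hN' h => (hN.eq_of_subset hN' h).symm⟩

end IsInducedMatching

theorem isMaximalInducedMatching_iff {M : Set (Sym2 V)} :
    IsMaximalInducedMatching G M ↔
      IsInducedMatching G M ∧ ∀ e ∈ G.edgeSet, ∃ m ∈ M, ¬ FarApart G e m := by
  refine ⟨fun ⟨hM, hmax⟩ => ⟨hM, fun e he => ?_⟩, fun ⟨hM, hdom⟩ => ⟨hM, fun N hN hMN => ?_⟩⟩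
  · by_contra! hfar
    have heM : e ∈ M :=
      hmax _ (hM.insert he hfar) (Set.subset_insert e M) ▸ Set.mem_insert e M
    exact FarApart.irrefl e (hfar e heM)
  · refine Set.Subset.antisymm (fun e he => ?_) hMN
    obtain ⟨m, hm, hem⟩ := hdom e (hN.1 he)
    by_contra heM
    exact hem (hN.2 e he m (hMN hm) (fun h => heM (h ▸ hm)))

end InducedMatchings

section InducedSubgraphs

variable {V W : Type*} {G : SimpleGraph V} {H : SimpleGraph W}

theorem IsMaximalInducedMatching.exists_not_farApart_of_induce {s : Set V} {M : Set (Sym2 s)}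
    (hM : IsMaximalInducedMatching (G.induce s) M) {e : Sym2 V} (he : e ∈ G.edgeSet)
    (hes : ∀ u ∈ e, u ∈ s) :
    ∃ m ∈ Sym2.map (Embedding.induce s : G.induce s ↪g G) '' M, ¬ FarApart G e m := by
  induction e with | _ a b
  let e' : Sym2 s := s(⟨a, hes a (Sym2.mem_mk_left a b)⟩, ⟨b, hes b (Sym2.mem_mk_right a b)⟩)
  obtain ⟨m, hm, hfar⟩ := (isMaximalInducedMatching_iff.1 hM).2 e' he
  exact ⟨_, ⟨m, hm, rfl⟩, fun h => hfar ((FarApart.map_iff (Embedding.induce s)).1 h)⟩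

variable [Finite V]

theorem WellIndumatched.of_embedding (hG : WellIndumatched G) (f : H ↪g G) (K : Set (Sym2 V))
    (hdisj : ∀ M, IsMaximalInducedMatching H M → Disjoint (Sym2.map f '' M) K)
    (hmax : ∀ M, IsMaximalInducedMatching H M →
      IsMaximalInducedMatching G (Sym2.map f '' M ∪ K)) :
    WellIndumatched H := by
  have hcard (M) (hM : IsMaximalInducedMatching H M) :
      (Sym2.map f '' M ∪ K).ncard = M.ncard + K.ncard := by
    rw [Set.ncard_union_eq (hdisj M hM),
      Set.ncard_image_of_injective _ (Sym2.map.injective f.injective)]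
  intro M N hM hN
  have := hG _ _ (hmax M hM) (hmax N hN)
  rw [hcard M hM, hcard N hN] at this
  exact Nat.add_right_cancel this

theorem WellIndumatched.induce_farFrom (hG : WellIndumatched G) {K : Set (Sym2 V)}
    (hK : IsInducedMatching G K) :
    WellIndumatched (G.induce {z | ∀ k ∈ K, ∀ u ∈ k, u ≠ z ∧ ¬ G.Adj u z}) := by
  set s := {z | ∀ k ∈ K, ∀ u ∈ k, u ≠ z ∧ ¬ G.Adj u z}
  have hfar (M : Set (Sym2 s)) :
      ∀ m ∈ Sym2.map (Embedding.induce s : G.induce s ↪g G) '' M, ∀ k ∈ K, FarApart G m k := by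
    rintro _ ⟨m, -, rfl⟩ k hk
    refine FarApart.symm fun u hu v hv => ?_
    obtain ⟨z, -, rfl⟩ := Sym2.mem_map.1 hv
    exact z.2 k hk u hu
  refine hG.of_embedding (Embedding.induce s) K (fun M _ => ?_) (fun M hM => ?_)
  · exact Set.disjoint_left.2 fun m hm hmK => FarApart.irrefl m (hfar M m hm m hmK)
  refine isMaximalInducedMatching_iff.2
    ⟨(hM.1.image (Embedding.induce s)).union hK (hfar M), fun e he => ?_⟩
  by_cases h : ∀ k ∈ K, FarApart G k e
  · obtain ⟨m, hm, hem⟩ := hM.exists_not_farApart_of_induce he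
      (fun v hv k hk u hu => h k hk u hu v hv)
    exact ⟨m, Or.inl hm, hem⟩
  · push Not at h
    obtain ⟨k, hk, hke⟩ := h
    exact ⟨k, Or.inr hk, fun h => hke h.symm⟩

theorem WellIndumatched.induce_compl_singleton (hG : WellIndumatched G) {b : V}
    (hb : ∀ z, G.Adj b z → ∃ e ∈ G.edgeSet, b ∉ e ∧
      ∀ f ∈ G.edgeSet, FarApart G s(b, z) f → FarApart G e f) :
    WellIndumatched (G.induce {b}ᶜ) := by
  refine hG.of_embedding (Embedding.induce _) ∅ (fun M _ => Set.disjoint_empty _)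
    (fun M hM => ?_)
  rw [Set.union_empty]
  have hM' := hM.1.image (Embedding.induce {b}ᶜ)
  refine isMaximalInducedMatching_iff.2 ⟨hM', fun e he => ?_⟩
  by_cases hbe : b ∈ e
  · obtain ⟨z, rfl⟩ := hbe
    obtain ⟨e', he', hbe', hfar⟩ := hb z he
    obtain ⟨m, hm, hem⟩ := hM.exists_not_farApart_of_induce he'
      (fun u hu h => hbe' (Set.mem_singleton_iff.1 h ▸ hu))
    exact ⟨m, hm, fun h => hem (hfar m (hM'.1 hm) h)⟩
  · exact hM.exists_not_farApart_of_induce he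
      (fun u hu h => hbe (Set.mem_singleton_iff.1 h ▸ hu))

end InducedSubgraphs

section Exchange

variable {V : Type*} {G : SimpleGraph V}

/-- The vertex `p` is saturated by `M`: it is an endpoint of an element of `M`. -/
def Saturates (M : Set (Sym2 V)) (p : V) : Prop :=
  ∃ e ∈ M, p ∈ e

/-- The vertex `p` is free for `M`: `M` saturates no vertex of the closed neighbourhood of `p`. -/
structure IsFree (G : SimpleGraph V) (M : Set (Sym2 V)) (p : V) : Prop where
  not_saturates : ¬ Saturates M p
  not_saturates_of_adj : ∀ q, G.Adj p q → ¬ Saturates M q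

/-- The edge `e` is far from all elements of `M`, so that it can be added to `M` when `M` is an
induced matching. -/
def IsAddable (G : SimpleGraph V) (M : Set (Sym2 V)) (e : Sym2 V) : Prop :=
  e ∈ G.edgeSet ∧ ∀ m ∈ M, FarApart G e m

/-- `N` is a maximal induced matching from which the edge `s(u, w)` has been removed. -/
structure IsCompletedBy (G : SimpleGraph V) (N : Set (Sym2 V)) (u w : V) : Prop where
  isMaximal : IsMaximalInducedMatching G (insert s(u, w) N)
  notMem : s(u, w) ∉ N

theorem IsFree.isAddable {M : Set (Sym2 V)} {a b : V} (hab : G.Adj a b) (ha : IsFree G M a)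
    (hb : IsFree G M b) : IsAddable G M s(a, b) :=
  ⟨hab, fun m hm => FarApart.mk_iff.2 fun v hv =>
    ⟨⟨fun h => ha.not_saturates ⟨m, hm, h ▸ hv⟩, fun h => ha.not_saturates_of_adj v h ⟨m, hm, hv⟩⟩,
      fun h => hb.not_saturates ⟨m, hm, h ▸ hv⟩, fun h => hb.not_saturates_of_adj v h ⟨m, hm, hv⟩⟩⟩

namespace IsInducedMatching

variable {N : Set (Sym2 V)}

theorem not_saturates_of_adj (hN : IsInducedMatching G N) {u w p : V} (huw : s(u, w) ∈ N)
    (hup : G.Adj u p) (hpw : p ≠ w) : ¬ Saturates N p := by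
  rintro ⟨e, he, hpe⟩
  by_cases h : e = s(u, w)
  · rcases Sym2.mem_iff.1 (h ▸ hpe) with rfl | rfl
    exacts [hup.ne rfl, hpw rfl]
  · exact (hN.2 _ huw _ he (Ne.symm h) u (Sym2.mem_mk_left u w) p hpe).2 hup

theorem exists_adj_saturates (hN : IsInducedMatching G N) {p : V} (hp : Saturates N p) :
    ∃ q, G.Adj p q ∧ Saturates N q := by
  obtain ⟨e, he, q, rfl⟩ := hp
  exact ⟨q, hN.1 he, _, he, Sym2.mem_mk_right p q⟩

theorem isFree (hN : IsInducedMatching G N) {p : V} (hp : ∀ q, G.Adj p q → ¬ Saturates N q) :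
    IsFree G N p :=
  ⟨fun h => let ⟨q, hpq, hq⟩ := hN.exists_adj_saturates h; hp q hpq hq, hp⟩

end IsInducedMatching

namespace IsCompletedBy

variable {N : Set (Sym2 V)} {u w : V}

theorem exists_superset [Finite V] {K : Set (Sym2 V)} (hK : IsInducedMatching G K)
    (huw : IsAddable G K s(u, w)) : ∃ N, K ⊆ N ∧ IsCompletedBy G N u w := by
  obtain ⟨M, hKM, hM⟩ := (hK.insert huw.1 huw.2).exists_maximal
  rw [Set.insert_subset_iff] at hKM
  refine ⟨M \ {s(u, w)}, fun k hk => ⟨hKM.2 hk, ?_⟩, ?_, fun h => h.2 rfl⟩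
  · rintro rfl
    exact FarApart.irrefl _ (huw.2 _ hk)
  · rwa [Set.insert_sdiff_self_of_mem hKM.1]

theorem isInducedMatching (h : IsCompletedBy G N u w) : IsInducedMatching G N :=
  h.isMaximal.1.mono (Set.subset_insert _ _)

theorem adj (h : IsCompletedBy G N u w) : G.Adj u w :=
  h.isMaximal.1.1 (Set.mem_insert _ _)

theorem symm (h : IsCompletedBy G N u w) : IsCompletedBy G N w u :=
  ⟨Sym2.eq_swap (a := u) ▸ h.isMaximal, Sym2.eq_swap (a := u) ▸ h.notMem⟩

theorem isFree_left (h : IsCompletedBy G N u w) : IsFree G N u := by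
  refine h.isInducedMatching.isFree ?_
  rintro q huq ⟨e, he, hqe⟩
  have hne : s(u, w) ≠ e := fun hue => h.notMem (hue ▸ he)
  exact (h.isMaximal.1.2 _ (Set.mem_insert _ _) e (Set.mem_insert_of_mem _ he) hne
    u (Sym2.mem_mk_left u w) q hqe).2 huq

theorem isFree_right (h : IsCompletedBy G N u w) : IsFree G N w :=
  h.symm.isFree_left

/-- Otherwise `e` and `f` could replace `s(u, w)`, producing a larger induced matching. -/
theorem not_farApart [Finite V] (h : IsCompletedBy G N u w) (hG : WellIndumatched G)
    {e f : Sym2 V} (he : IsAddable G N e) (hf : IsAddable G N f) : ¬ FarApart G e f := by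
  intro hef
  have hefN : ∀ m ∈ insert f N, FarApart G e m := by
    rintro m (rfl | hm)
    exacts [hef, he.2 m hm]
  obtain ⟨M, hNM, hM⟩ := ((h.isInducedMatching.insert hf.1 hf.2).insert he.1 hefN).exists_maximal
  have hcard := Set.ncard_le_ncard hNM
  rw [← hG _ _ h.isMaximal hM, Set.ncard_insert_of_notMem h.notMem,
    Set.ncard_insert_of_notMem fun hm => FarApart.irrefl e (hefN e hm),
    Set.ncard_insert_of_notMem fun hm => FarApart.irrefl f (hf.2 f hm)] at hcard
  omega

end IsCompletedBy

end Exchange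

section Pendants

variable {V : Type*} {G : SimpleGraph V}

/-- `b` is a leaf of `G` whose neighbour is `v`. -/
structure IsPendantLeaf (G : SimpleGraph V) (v b : V) : Prop where
  adj : G.Adj v b
  eq_of_adj : ∀ z, G.Adj b z → z = v

/-- `v x y` is a path hanging at `v`: the vertex `y` is a leaf and `x` has degree two. -/
structure IsPendantPath (G : SimpleGraph V) (v x y : V) : Prop where
  adj : G.Adj v x
  isPendantLeaf : IsPendantLeaf G x y
  ne : v ≠ y
  eq_or_eq_of_adj : ∀ z, G.Adj x z → z = v ∨ z = y

/-- All neighbours of `v` lie in `S`. -/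
def IsBare (G : SimpleGraph V) (S : Set V) (v : V) : Prop :=
  ∀ z, G.Adj v z → z ∈ S

/-- Outside `S`, the vertex `v` has exactly one neighbour, and that is a leaf. -/
def HasPendantLeaf (G : SimpleGraph V) (S : Set V) (v : V) : Prop :=
  ∃ b ∉ S, IsPendantLeaf G v b ∧ ∀ z, G.Adj v z → z ∈ S ∨ z = b

/-- Outside `S`, the vertex `v` has exactly one neighbour, and that is the middle vertex of a path
hanging at `v`. -/
def HasPendantPath (G : SimpleGraph V) (S : Set V) (v : V) : Prop :=
  ∃ x ∉ S, ∃ y ∉ S, IsPendantPath G v x y ∧ ∀ z, G.Adj v z → z ∈ S ∨ z = x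

theorem IsPendantLeaf.neighborSet_eq {v b : V} (h : IsPendantLeaf G v b) :
    G.neighborSet b = {v} :=
  Set.Subset.antisymm h.eq_of_adj (Set.singleton_subset_iff.2 h.adj.symm)

theorem IsPendantLeaf.farApart {v b p q : V} (h : IsPendantLeaf G v b) (hpq : G.Adj p q)
    (hp : v ≠ p ∧ ¬ G.Adj v p) (hq : v ≠ q ∧ ¬ G.Adj v q) : FarApart G s(v, b) s(p, q) := by
  refine FarApart.mk_mk_iff.2 ⟨⟨hp, ?_, fun hbp => hp.1 (h.eq_of_adj p hbp).symm⟩, hq, ?_,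
    fun hbq => hq.1 (h.eq_of_adj q hbq).symm⟩
  · rintro rfl
    exact hp.2 h.adj
  · rintro rfl
    exact hq.2 h.adj

theorem IsPendantLeaf.farApart_pendantLeaf {u v a b : V} (ha : IsPendantLeaf G u a)
    (hb : IsPendantLeaf G v b) (hne : u ≠ v) (huv : ¬ G.Adj u v) : FarApart G s(u, a) s(v, b) := by
  refine ha.farApart hb.adj ⟨hne, huv⟩ ⟨?_, fun h => hne (hb.eq_of_adj u h.symm)⟩
  rintro rfl
  exact huv hb.adj.symm

theorem IsPendantPath.farApart {v x y p q : V} (h : IsPendantPath G v x y) (hpq : G.Adj p q)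
    (hp : v ≠ p ∧ x ≠ p) (hq : v ≠ q ∧ x ≠ q) : FarApart G s(x, y) s(p, q) := by
  have hyp : y ≠ p := by
    rintro rfl
    exact hq.2 (h.isPendantLeaf.eq_of_adj q hpq).symm
  have hyq : y ≠ q := by
    rintro rfl
    exact hp.2 (h.isPendantLeaf.eq_of_adj p hpq.symm).symm
  have hx {z : V} (hvz : v ≠ z) (hyz : y ≠ z) : ¬ G.Adj x z := fun hxz =>
    (h.eq_or_eq_of_adj z hxz).elim hvz.symm hyz.symm
  exact FarApart.mk_mk_iff.2
    ⟨⟨⟨hp.2, hx hp.1 hyp⟩, hyp, fun hy => hp.2 (h.isPendantLeaf.eq_of_adj p hy).symm⟩,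
      ⟨hq.2, hx hq.1 hyq⟩, hyq, fun hy => hq.2 (h.isPendantLeaf.eq_of_adj q hy).symm⟩

theorem IsPendantLeaf.isFree {N : Set (Sym2 V)} {v b : V} (h : IsPendantLeaf G v b)
    (hN : IsInducedMatching G N) (hv : ¬ Saturates N v) : IsFree G N b :=
  hN.isFree fun z hbz => by rwa [h.eq_of_adj z hbz]

theorem IsFree.isAddable_pendantLeaf {N : Set (Sym2 V)} {v b : V} (hv : IsFree G N v)
    (hN : IsInducedMatching G N) (hb : IsPendantLeaf G v b) : IsAddable G N s(v, b) :=
  hv.isAddable hb.adj (hb.isFree hN hv.not_saturates)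

theorem IsFree.isAddable_pendantPath {N : Set (Sym2 V)} {v x y : V} (hv : IsFree G N v)
    (hN : IsInducedMatching G N) (hxy : IsPendantPath G v x y) : IsAddable G N s(x, y) := by
  have hx : ¬ Saturates N x := hv.not_saturates_of_adj x hxy.adj
  have hy : IsFree G N y := hxy.isPendantLeaf.isFree hN hx
  refine IsFree.isAddable hxy.isPendantLeaf.adj (hN.isFree fun z hxz => ?_) hy
  rcases hxy.eq_or_eq_of_adj z hxz with rfl | rfl
  exacts [hv.not_saturates, hy.not_saturates]

theorem IsFree.exists_isAddable {N : Set (Sym2 V)} {S : Set V} {v : V} (hv : IsFree G N v)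
    (hN : IsInducedMatching G N) (hvS : HasPendantLeaf G S v ∨ HasPendantPath G S v) :
    ∃ e, IsAddable G N e ∧ ∀ p q, G.Adj p q → v ≠ p ∧ ¬ G.Adj v p → v ≠ q ∧ ¬ G.Adj v q →
      FarApart G e s(p, q) := by
  rcases hvS with ⟨b, -, hb, -⟩ | ⟨x, -, y, -, hxy, -⟩
  · exact ⟨_, hv.isAddable_pendantLeaf hN hb, fun p q => hb.farApart⟩
  · exact ⟨_, hv.isAddable_pendantPath hN hxy, fun p q hpq hp hq =>
      hxy.farApart hpq ⟨hp.1, fun h => hp.2 (h ▸ hxy.adj)⟩ ⟨hq.1, fun h => hq.2 (h ▸ hxy.adj)⟩⟩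

theorem HasPendantLeaf.exists_isInducedMatching_pair {S : Set V} {u v : V}
    (hu : HasPendantLeaf G S u) (hv : HasPendantLeaf G S v) (huv : ¬ G.Adj u v) :
    ∃ b ∉ S, ∃ b' ∉ S, IsPendantLeaf G u b ∧ IsPendantLeaf G v b' ∧
      IsInducedMatching G {s(u, b), s(v, b')} := by
  obtain ⟨b, hbS, hb, -⟩ := hu
  obtain ⟨b', hbS', hb', -⟩ := hv
  rcases eq_or_ne u v with rfl | hne
  · refine ⟨b, hbS, b, hbS, hb, hb, ?_⟩
    rw [Set.pair_eq_singleton]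
    exact IsInducedMatching.singleton hb.adj
  · refine ⟨b, hbS, b', hbS', hb, hb', (IsInducedMatching.singleton hb'.adj).insert hb.adj ?_⟩
    rintro _ rfl
    exact hb.farApart_pendantLeaf hb' hne huv

variable [Finite V]

theorem WellIndumatched.eq_of_pendantLeaf_of_pendantPath (hG : WellIndumatched G) {u v b x y : V}
    (huv : G.Adj u v) (hb : IsPendantLeaf G u b) (hxy : IsPendantPath G v x y) : x = u := by
  by_contra hxu
  obtain ⟨N, -, hN⟩ := IsCompletedBy.exists_superset IsInducedMatching.empty
    (u := u) (w := v) ⟨huv, fun m hm => hm.elim⟩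
  refine hN.not_farApart hG (hN.isFree_right.isAddable_pendantPath hN.isInducedMatching hxy)
    (hN.isFree_left.isAddable_pendantLeaf hN.isInducedMatching hb)
    (hxy.farApart hb.adj ⟨huv.ne', hxu⟩ ⟨?_, ?_⟩)
  · rintro rfl
    exact hxu (hb.eq_of_adj x hxy.adj)
  · rintro rfl
    exact huv.ne' (hb.eq_of_adj v hxy.adj.symm)

theorem WellIndumatched.eq_of_pendantPath_of_pendantPath (hG : WellIndumatched G)
    {v x y x' y' : V} (hxy : IsPendantPath G v x y) (hxy' : IsPendantPath G v x' y') : x = x' := by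
  by_contra hxx'
  obtain ⟨N, -, hN⟩ := IsCompletedBy.exists_superset IsInducedMatching.empty
    (u := v) (w := x) ⟨hxy.adj, fun m hm => hm.elim⟩
  refine hN.not_farApart hG (hN.isFree_left.isAddable_pendantPath hN.isInducedMatching hxy)
    (hN.isFree_left.isAddable_pendantPath hN.isInducedMatching hxy')
    (hxy.farApart hxy'.isPendantLeaf.adj ⟨hxy'.adj.ne, hxx'⟩ ⟨hxy'.ne, ?_⟩)
  rintro rfl
  exact hxy'.adj.ne (hxy'.isPendantLeaf.eq_of_adj v hxy.adj.symm)

end Pendants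

section InducedCycles

variable {V : Type*} {G : SimpleGraph V} {S : Set V} {g : ℕ} {c : ℤ → V}

/-- `c` runs periodically, with period `g`, along a chordless cycle of `G` with vertex set `S`.
Indexing by `ℤ` makes rotations and reflections of the cycle available. -/
structure IsInducedCycle (G : SimpleGraph V) (S : Set V) (g : ℕ) (c : ℤ → V) : Prop where
  eq_iff : ∀ i j, c i = c j ↔ i ≡ j [ZMOD g]
  adj : ∀ i, G.Adj (c i) (c (i + 1))
  eq_or_eq_of_adj : ∀ i j, G.Adj (c i) (c j) → c j = c (i + 1) ∨ c j = c (i - 1)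
  range_eq : Set.range c = S

namespace IsInducedCycle

theorem reflect (hc : IsInducedCycle G S g c) (k : ℤ) :
    IsInducedCycle G S g (fun j => c (k - j)) where
  eq_iff i j := by
    rw [hc.eq_iff, Int.modEq_iff_dvd, Int.modEq_iff_dvd, sub_sub_sub_cancel_left, dvd_sub_comm]
  adj i := by simpa only [sub_add_eq_sub_sub, sub_add_cancel] using (hc.adj (k - i - 1)).symm
  eq_or_eq_of_adj i j h := by
    simpa only [sub_add_eq_sub_sub, sub_sub_eq_add_sub, add_sub_right_comm, or_comm]
      using hc.eq_or_eq_of_adj _ _ h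
  range_eq := by
    rw [← hc.range_eq]
    exact (Equiv.subLeft k).surjective.range_comp c

theorem shift (hc : IsInducedCycle G S g c) (k : ℤ) :
    IsInducedCycle G S g (fun j => c (k + j)) := by
  simpa only [zero_sub, sub_neg_eq_add] using (hc.reflect k).reflect 0

theorem exists_zero_eq (hc : IsInducedCycle G S g c) {v : V} (hv : v ∈ S) :
    ∃ c', IsInducedCycle G S g c' ∧ c' 0 = v := by
  obtain ⟨i, rfl⟩ := hc.range_eq ▸ hv
  exact ⟨_, hc.shift i, congrArg c (add_zero i)⟩

theorem mem (hc : IsInducedCycle G S g c) (i : ℤ) : c i ∈ S :=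
  hc.range_eq ▸ Set.mem_range_self i

theorem adj_sub_one (hc : IsInducedCycle G S g c) (i : ℤ) : G.Adj (c i) (c (i - 1)) := by
  simpa only [sub_add_cancel] using (hc.adj (i - 1)).symm

theorem eq_or_eq_of_adj_of_mem (hc : IsInducedCycle G S g c) {i : ℤ} {z : V}
    (h : G.Adj (c i) z) (hz : z ∈ S) : z = c (i + 1) ∨ z = c (i - 1) := by
  obtain ⟨j, rfl⟩ := hc.range_eq ▸ hz
  exact hc.eq_or_eq_of_adj i j h

theorem ne (hc : IsInducedCycle G S g c) {i j : ℤ} (hij : i < j) (hji : j < i + g) :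
    c i ≠ c j := by
  rw [Ne, hc.eq_iff, Int.modEq_iff_dvd]
  exact fun h => (Int.le_of_dvd (by lia) h).not_gt (by lia)

theorem ne_and_not_adj (hc : IsInducedCycle G S g c) {i j : ℤ} (hij : i + 1 < j)
    (hji : j + 1 < i + g) : c i ≠ c j ∧ ¬ G.Adj (c i) (c j) := by
  refine ⟨hc.ne (by lia) (by lia), fun h => ?_⟩
  rcases hc.eq_or_eq_of_adj i j h with h | h
  · exact hc.ne (by lia) (by lia) h.symm
  · exact hc.ne (by lia) (by lia) h.symm

theorem farApart (hc : IsInducedCycle G S g c) {i j : ℤ} (hij : i + 2 < j) (hji : j + 2 < i + g) :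
    FarApart G s(c i, c (i + 1)) s(c j, c (j + 1)) :=
  FarApart.mk_mk_iff.2
    ⟨⟨hc.ne_and_not_adj (by lia) (by lia), hc.ne_and_not_adj (by lia) (by lia)⟩,
      hc.ne_and_not_adj (by lia) (by lia), hc.ne_and_not_adj (by lia) (by lia)⟩

variable {N : Set (Sym2 V)}

theorem isFree_of_isBare (hc : IsInducedCycle G S g c) (hN : IsInducedMatching G N) {i : ℤ}
    (hi : IsBare G S (c i)) (hpred : ¬ Saturates N (c (i - 1)))
    (hsucc : ¬ Saturates N (c (i + 1))) : IsFree G N (c i) := by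
  refine hN.isFree fun z hz => ?_
  rcases hc.eq_or_eq_of_adj_of_mem hz (hi z hz) with rfl | rfl
  exacts [hsucc, hpred]

theorem isFree_of_isBare_or_hasPendantLeaf (hc : IsInducedCycle G S g c)
    (hN : IsInducedMatching G N) {i : ℤ} (hi : IsBare G S (c i) ∨ HasPendantLeaf G S (c i))
    (hpred : ¬ Saturates N (c (i - 1))) (hself : ¬ Saturates N (c i))
    (hsucc : ¬ Saturates N (c (i + 1))) : IsFree G N (c i) := by
  rcases hi with hi | ⟨b, -, hb, hi⟩
  · exact hc.isFree_of_isBare hN hi hpred hsucc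
  refine hN.isFree fun z hz => ?_
  rcases hi z hz with hzS | rfl
  · rcases hc.eq_or_eq_of_adj_of_mem hz hzS with rfl | rfl
    exacts [hsucc, hpred]
  · exact (hb.isFree hN hself).not_saturates

theorem isFree_one (hc : IsInducedCycle G S g c) (hN : IsInducedMatching G N)
    (h₀ : IsFree G N (c 0)) (h₁ : HasPendantLeaf G S (c 1)) (h₂ : IsBare G S (c 2)) {p : V}
    (hp : p ∉ S) (h₄ : s(c 4, p) ∈ N) : IsFree G N (c 1) := by
  have hsat₁ : ¬ Saturates N (c 1) := h₀.not_saturates_of_adj _ (hc.adj 0)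
  have hsat₃ : ¬ Saturates N (c 3) :=
    hN.not_saturates_of_adj h₄ (hc.adj_sub_one 4) (fun h => hp (h ▸ hc.mem 3))
  have hfree₂ : IsFree G N (c 2) := hc.isFree_of_isBare hN h₂ hsat₁ hsat₃
  exact hc.isFree_of_isBare_or_hasPendantLeaf hN (Or.inr h₁) h₀.not_saturates hsat₁
    hfree₂.not_saturates

theorem exists_isCompletedBy [Finite V] (hc : IsInducedCycle G S g c) {j : ℤ} (hj : 2 < j)
    (hjg : j + 2 < g) : ∃ N, IsCompletedBy G N (c 0) (c 1) ∧ ¬ Saturates N (c (j - 1)) := by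
  have hK : IsInducedMatching G {s(c j, c (j + 1))} := IsInducedMatching.singleton (hc.adj j)
  obtain ⟨N, hKN, hN⟩ := IsCompletedBy.exists_superset hK (u := c 0) (w := c 1)
    ⟨hc.adj 0, by rintro _ rfl; exact hc.farApart (by lia) (by lia)⟩
  exact ⟨N, hN, hN.isInducedMatching.not_saturates_of_adj (hKN rfl) (hc.adj_sub_one j)
    (hc.ne (by lia) (by lia))⟩

end IsInducedCycle

end InducedCycles

section ForbiddenConfigurations

variable {V : Type*} [Finite V] {G : SimpleGraph V} {S : Set V} {g : ℕ} {c : ℤ → V}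

namespace IsInducedCycle

theorem not_hasPendantLeaf_two (hc : IsInducedCycle G S g c) (hG : WellIndumatched G) (hg : 7 ≤ g)
    (h₀ : HasPendantLeaf G S (c 0) ∨ HasPendantPath G S (c 0)) : ¬ HasPendantLeaf G S (c 2) := by
  intro h₂
  obtain ⟨N, hN, h₃⟩ := hc.exists_isCompletedBy (j := 4) (by lia) (by lia)
  have hN' := hN.isInducedMatching
  obtain ⟨e, heN, he⟩ := hN.isFree_left.exists_isAddable hN' h₀
  have hfree₂ : IsFree G N (c 2) := hc.isFree_of_isBare_or_hasPendantLeaf hN' (Or.inr h₂)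
    hN.isFree_right.not_saturates (hN.isFree_right.not_saturates_of_adj _ (hc.adj 1)) h₃
  obtain ⟨b, hbS, hb, -⟩ := h₂
  refine hN.not_farApart hG heN (hfree₂.isAddable_pendantLeaf hN' hb)
    (he _ _ hb.adj (hc.ne_and_not_adj (by lia) (by lia)) ⟨?_, fun h => ?_⟩)
  · rintro rfl
    exact hbS (hc.mem 0)
  · exact hc.ne (by lia) (by lia) (hb.eq_of_adj _ h.symm)

theorem not_isBare_three (hc : IsInducedCycle G S g c) (hG : WellIndumatched G) (hg : 8 ≤ g)
    (h₀ : HasPendantLeaf G S (c 0) ∨ HasPendantPath G S (c 0))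
    (h₂ : IsBare G S (c 2) ∨ HasPendantLeaf G S (c 2)) : ¬ IsBare G S (c 3) := by
  intro h₃
  obtain ⟨N, hN, h₄⟩ := hc.exists_isCompletedBy (j := 5) (by lia) (by lia)
  have hN' := hN.isInducedMatching
  obtain ⟨e, heN, he⟩ := hN.isFree_left.exists_isAddable hN' h₀
  have hsat₂ : ¬ Saturates N (c 2) := hN.isFree_right.not_saturates_of_adj _ (hc.adj 1)
  have hfree₃ : IsFree G N (c 3) := hc.isFree_of_isBare hN' h₃ hsat₂ h₄
  have hfree₂ : IsFree G N (c 2) := hc.isFree_of_isBare_or_hasPendantLeaf hN' h₂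
    hN.isFree_right.not_saturates hsat₂ hfree₃.not_saturates
  exact hN.not_farApart hG heN (hfree₂.isAddable (hc.adj 2) hfree₃)
    (he _ _ (hc.adj 2) (hc.ne_and_not_adj (by lia) (by lia)) (hc.ne_and_not_adj (by lia) (by lia)))

theorem not_isBare_two (hc : IsInducedCycle G S g c) (hG : WellIndumatched G) (hg : 7 ≤ g)
    (h₀ : HasPendantPath G S (c 0)) : ¬ IsBare G S (c 2) := by
  intro h₂
  obtain ⟨N, hN, h₃⟩ := hc.exists_isCompletedBy (j := 4) (by lia) (by lia)
  have hN' := hN.isInducedMatching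
  have hfree₂ : IsFree G N (c 2) := hc.isFree_of_isBare hN' h₂ hN.isFree_right.not_saturates h₃
  obtain ⟨x, hxS, y, -, hxy, -⟩ := h₀
  exact hN.not_farApart hG (hN.isFree_left.isAddable_pendantPath hN' hxy)
    (hN.isFree_right.isAddable (hc.adj 1) hfree₂)
    (hxy.farApart (hc.adj 1) ⟨hc.ne (by lia) (by lia), fun h => hxS (h ▸ hc.mem 1)⟩
      ⟨hc.ne (by lia) (by lia), fun h => hxS (h ▸ hc.mem 2)⟩)

theorem not_hasPendantPath_one (hc : IsInducedCycle G S g c) (hG : WellIndumatched G)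
    (h₀ : HasPendantLeaf G S (c 0)) : ¬ HasPendantPath G S (c 1) := by
  rintro ⟨x, hxS, y, -, hxy, -⟩
  obtain ⟨b, -, hb, -⟩ := h₀
  exact hxS (hG.eq_of_pendantLeaf_of_pendantPath (hc.adj 0) hb hxy ▸ hc.mem 0)

theorem exists_isCompletedBy_of_hasPendantLeaf (hc : IsInducedCycle G S g c) (hg : 9 ≤ g)
    (hg' : g ≠ 10) (h₃' : HasPendantLeaf G S (c (-3))) (h₆ : HasPendantLeaf G S (c 6)) :
    ∃ N, IsCompletedBy G N (c 1) (c 2) ∧ (∃ b ∉ S, s(c (-3), b) ∈ N) ∧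
      ∃ b ∉ S, s(c 6, b) ∈ N := by
  have hnadj : ¬ G.Adj (c (-3)) (c 6) := by
    obtain rfl | hg : g = 9 ∨ 10 < g := by lia
    · rw [(hc.eq_iff 6 (-3)).2 (by decide)]
      exact G.irrefl
    · exact (hc.ne_and_not_adj (by lia) (by lia)).2
  obtain ⟨b, hbS, b', hbS', hb, hb', hK⟩ := h₃'.exists_isInducedMatching_pair h₆ hnadj
  have hfar : ∀ k ∈ ({s(c (-3), b), s(c 6, b')} : Set (Sym2 V)), FarApart G s(c 1, c 2) k := by
    rintro _ (rfl | rfl) <;> apply FarApart.symm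
    · exact hb.farApart (hc.adj 1) (hc.ne_and_not_adj (by lia) (by lia))
        (hc.ne_and_not_adj (by lia) (by lia))
    · refine hb'.farApart (hc.adj 1) ?_ ?_
      · simpa only [ne_comm, G.adj_comm] using hc.ne_and_not_adj (i := 1) (j := 6) (by lia) (by lia)
      · simpa only [ne_comm, G.adj_comm] using hc.ne_and_not_adj (i := 2) (j := 6) (by lia) (by lia)
  obtain ⟨N, hKN, hN⟩ := IsCompletedBy.exists_superset hK ⟨hc.adj 1, hfar⟩
  rw [Set.insert_subset_iff, Set.singleton_subset_iff] at hKN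
  exact ⟨N, hN, ⟨b, hbS, hKN.1⟩, b', hbS', hKN.2⟩

/-- The edge `s(c 1, c 2)` can be exchanged for the leaf edges at `c 0` and `c 3`, because the leaf
edges at `c (-3)` and `c 6` prevent `c (-1)` and `c 4` from being saturated. -/
theorem not_isBare_of_hasPendantLeaf (hc : IsInducedCycle G S g c) (hG : WellIndumatched G)
    (hg : 9 ≤ g) (hg' : g ≠ 10) (h₃' : HasPendantLeaf G S (c (-3)))
    (h₀ : HasPendantLeaf G S (c 0)) (h₃ : HasPendantLeaf G S (c 3))
    (h₆ : HasPendantLeaf G S (c 6)) (h₁' : IsBare G S (c (-1))) : ¬ IsBare G S (c 4) := by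
  intro h₄
  obtain ⟨N, hN, ⟨p, hp, hpN⟩, q, hq, hqN⟩ :=
    hc.exists_isCompletedBy_of_hasPendantLeaf hg hg' h₃' h₆
  have hfree₀ : IsFree G N (c 0) :=
    (hc.reflect 1).isFree_one hN.isInducedMatching hN.isFree_left h₀ h₁' hp hpN
  have hfree₃ : IsFree G N (c 3) :=
    (hc.shift 2).isFree_one hN.isInducedMatching hN.isFree_right h₃ h₄ hq hqN
  obtain ⟨b, -, hb, -⟩ := h₀
  obtain ⟨b', -, hb', -⟩ := h₃
  obtain ⟨hne, hnadj⟩ := hc.ne_and_not_adj (i := 0) (j := 3) (by lia) (by lia)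
  exact hN.not_farApart hG (hfree₀.isAddable_pendantLeaf hN.isInducedMatching hb)
    (hfree₃.isAddable_pendantLeaf hN.isInducedMatching hb') (hb.farApart_pendantLeaf hb' hne hnadj)

theorem hasPendantLeaf_three (hc : IsInducedCycle G S g c) (hG : WellIndumatched G) (hg : 8 ≤ g)
    (hS : ∀ v ∈ S, IsBare G S v ∨ HasPendantLeaf G S v ∨ HasPendantPath G S v)
    (h₀ : HasPendantLeaf G S (c 0)) : HasPendantLeaf G S (c 3) := by
  rcases hS (c 3) (hc.mem 3) with h₃ | h₃ | h₃
  · rcases hS (c 2) (hc.mem 2) with h₂ | h₂ | h₂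
    · exact absurd h₃ (hc.not_isBare_three hG hg (Or.inl h₀) (Or.inl h₂))
    · exact absurd h₃ (hc.not_isBare_three hG hg (Or.inl h₀) (Or.inr h₂))
    · exact absurd h₀ ((hc.reflect 2).not_hasPendantLeaf_two hG (by lia) (Or.inr h₂))
  · exact h₃
  · rcases hS (c 1) (hc.mem 1) with h₁ | h₁ | h₁
    · exact absurd h₁ ((hc.reflect 3).not_isBare_two hG (by lia) h₃)
    · exact absurd h₁ ((hc.reflect 3).not_hasPendantLeaf_two hG (by lia) (Or.inr h₃))
    · exact absurd h₁ (hc.not_hasPendantPath_one hG h₀)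

theorem isBare_one (hc : IsInducedCycle G S g c) (hG : WellIndumatched G) (hg : 7 ≤ g)
    (hS : ∀ v ∈ S, IsBare G S v ∨ HasPendantLeaf G S v ∨ HasPendantPath G S v)
    (h₀ : HasPendantLeaf G S (c 0)) (h₃ : HasPendantLeaf G S (c 3)) : IsBare G S (c 1) := by
  rcases hS (c 1) (hc.mem 1) with h₁ | h₁ | h₁
  · exact h₁
  · exact absurd h₃ ((hc.shift 1).not_hasPendantLeaf_two hG hg (Or.inl h₁))
  · exact absurd h₁ (hc.not_hasPendantPath_one hG h₀)

theorem not_hasPendantLeaf_zero (hc : IsInducedCycle G S g c) (hG : WellIndumatched G) (hg : 9 ≤ g)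
    (hS : ∀ v ∈ S, IsBare G S v ∨ HasPendantLeaf G S v ∨ HasPendantPath G S v) :
    ¬ HasPendantLeaf G S (c 0) := by
  intro h₀
  have h₃ : HasPendantLeaf G S (c 3) := hc.hasPendantLeaf_three hG (by lia) hS h₀
  have h₆ : HasPendantLeaf G S (c 6) := (hc.shift 3).hasPendantLeaf_three hG (by lia) hS h₃
  have h₃' : HasPendantLeaf G S (c (-3)) := (hc.reflect 0).hasPendantLeaf_three hG (by lia) hS h₀
  have h₄ : IsBare G S (c 4) := (hc.shift 3).isBare_one hG (by lia) hS h₃ h₆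
  have h₁' : IsBare G S (c (-1)) := (hc.reflect 0).isBare_one hG (by lia) hS h₀ h₃'
  by_cases hg10 : g = 10
  · have h₉ : HasPendantLeaf G S (c 9) := (hc.shift 6).hasPendantLeaf_three hG (by lia) hS h₆
    have h₇ : c (-3) = c 7 := (hc.eq_iff _ _).2 (by subst hg10; decide)
    exact (hc.shift 7).not_hasPendantLeaf_two hG (by lia) (Or.inl (h₇ ▸ h₃')) h₉
  · exact hc.not_isBare_of_hasPendantLeaf hG hg hg10 h₃' h₀ h₃ h₆ h₁' h₄

theorem not_hasPendantLeaf (hc : IsInducedCycle G S g c) (hG : WellIndumatched G) (hg : 9 ≤ g)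
    (hS : ∀ v ∈ S, IsBare G S v ∨ HasPendantLeaf G S v ∨ HasPendantPath G S v) {v : V}
    (hv : v ∈ S) : ¬ HasPendantLeaf G S v := by
  obtain ⟨c', hc', rfl⟩ := hc.exists_zero_eq hv
  exact hc'.not_hasPendantLeaf_zero hG hg hS

end IsInducedCycle

end ForbiddenConfigurations

section Girth

variable {V : Type*} {G : SimpleGraph V}

theorem eq_of_isPath_of_length_add_length_lt_girth {u v : V} {p q : G.Walk u v} (hp : p.IsPath)
    (hq : q.IsPath) (hpq : p.length + q.length < G.girth) : p = q := by
  by_contra hne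
  obtain ⟨w, -, -, C, hC, hle⟩ := hp.exists_isCycle_length_le_add_of_ne hq hne
  exact (girth_le_length hC).not_gt (hle.trans_lt hpq)

theorem not_adj_of_three_lt_girth (hG : 3 < G.girth) {x y z : V} (hxy : G.Adj x y)
    (hyz : G.Adj y z) : ¬ G.Adj x z := by
  intro hxz
  have hp : (Walk.cons hxy hyz.toWalk).IsPath := by simp [hxy.ne, hxz.ne, hyz.ne]
  have hq : hxz.toWalk.IsPath := by simp [hxz.ne]
  simpa using congrArg Walk.length
    (eq_of_isPath_of_length_add_length_lt_girth hp hq (by simpa using hG))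

theorem eq_of_common_adj_of_four_lt_girth (hG : 4 < G.girth) {x y z z' : V} (hxy : x ≠ y)
    (hxz : G.Adj x z) (hzy : G.Adj z y) (hxz' : G.Adj x z') (hzy' : G.Adj z' y) : z = z' := by
  have hp : (Walk.cons hxz hzy.toWalk).IsPath := by simp [hxy, hxz.ne, hzy.ne]
  have hq : (Walk.cons hxz' hzy'.toWalk).IsPath := by simp [hxy, hxz'.ne, hzy'.ne]
  simpa using congrArg Walk.support
    (eq_of_isPath_of_length_add_length_lt_girth hp hq (by simpa using hG))

theorem exists_path_edges_subset_of_mem_support {w u v : V} {C : G.Walk w w} (hC : C.IsCycle)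
    (hu : u ∈ C.support) (hv : v ∈ C.support) :
    ∃ q : G.Walk u v, q.IsPath ∧ 2 * q.length ≤ C.length ∧ ∀ e ∈ q.edges, e ∈ C.edges := by
  classical
  set D := C.rotate u hu
  have hD : D.IsCycle := hC.rotate hu
  have hvD : v ∈ D.support := (C.mem_support_rotate_iff u hu).2 hv
  have hDC {e} (he : e ∈ D.edges) : e ∈ C.edges := (C.rotate_edges u hu).perm.mem_iff.1 he
  have hlen : (D.takeUntil v hvD).length + (D.dropUntil v hvD).length = C.length := by
    rw [← Walk.length_append, D.take_spec hvD, C.length_rotate]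
  rcases eq_or_ne u v with rfl | hne
  · exact ⟨Walk.nil, Walk.IsPath.nil, by simp, by simp⟩
  rcases Nat.lt_or_ge C.length (2 * (D.takeUntil v hvD).length) with hlt | hge
  · refine ⟨(D.dropUntil v hvD).reverse, Walk.IsPath.reverse ?_, ?_, fun e he => hDC ?_⟩
    · exact Walk.IsCycle.isPath_of_append_right (p := D.takeUntil v hvD) (Walk.not_nil_of_ne hne)
        ((D.take_spec hvD).symm ▸ hD)
    · rw [Walk.length_reverse]
      lia
    · rw [Walk.edges_reverse, List.mem_reverse] at he
      exact D.edges_dropUntil_subset_edges hvD he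
  · exact ⟨_, hD.isPath_takeUntil hvD, hge, fun e he => hDC (D.edges_takeUntil_subset_edges hvD he)⟩

theorem edges_subset_of_isPath {w u v : V} {C : G.Walk w w} (hC : C.IsCycle) (hu : u ∈ C.support)
    (hv : v ∈ C.support) {p : G.Walk u v} (hp : p.IsPath)
    (hpC : 2 * p.length + C.length < 2 * G.girth) : ∀ e ∈ p.edges, e ∈ C.edges := by
  obtain ⟨q, hq, hqC, hqe⟩ := exists_path_edges_subset_of_mem_support hC hu hv
  rwa [eq_of_isPath_of_length_add_length_lt_girth hp hq (by lia)]

/-- Paths of `G` of length at most `n` with both ends in `S` do not leave `S`. -/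
def AbsorbsPaths (G : SimpleGraph V) (S : Set V) (n : ℕ) : Prop :=
  ∀ u ∈ S, ∀ v ∈ S, ∀ p : G.Walk u v, p.IsPath → p.length ≤ n → ∀ z ∈ p.support, z ∈ S

theorem absorbsPaths_support {w : V} {C : G.Walk w w} (hC : C.IsCycle) {n : ℕ}
    (hn : 2 * n + C.length < 2 * G.girth) : AbsorbsPaths G {z | z ∈ C.support} n := by
  intro u hu v hv p hp hpn z hz
  rcases Walk.mem_support_iff_exists_mem_edges.1 hz with rfl | ⟨e, he, hze⟩
  · exact hv
  · exact Walk.mem_support_of_mem_edges (edges_subset_of_isPath hC hu hv hp (by lia) e he) hze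

theorem mem_edges_of_adj {w u v : V} {C : G.Walk w w} (hC : C.IsCycle)
    (hCg : C.length + 2 < 2 * G.girth) (hu : u ∈ C.support) (hv : v ∈ C.support)
    (huv : G.Adj u v) : s(u, v) ∈ C.edges :=
  edges_subset_of_isPath hC hu hv (p := huv.toWalk) (by simp [huv.ne])
    (by simpa [add_comm] using hCg) _ (by simp)

namespace AbsorbsPaths

variable {S : Set V} {n : ℕ}

theorem eq_of_adj_of_adj (hS : AbsorbsPaths G S n) (hn : 2 ≤ n) {x u v : V} (hx : x ∉ S)
    (hu : u ∈ S) (hv : v ∈ S) (hxu : G.Adj x u) (hxv : G.Adj x v) : u = v := by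
  by_contra huv
  exact hx (hS u hu v hv (.cons hxu.symm hxv.toWalk) (by simp [huv, hxu.ne', hxv.ne])
    (by simpa using hn) x (by simp))

theorem not_adj_of_adj_of_adj (hS : AbsorbsPaths G S n) (hn : 3 ≤ n) (hG : 3 < G.girth)
    {x y u v : V} (hx : x ∉ S) (hy : y ∉ S) (hu : u ∈ S) (hv : v ∈ S) (hxu : G.Adj x u)
    (hyv : G.Adj y v) : ¬ G.Adj x y := by
  intro hxy
  rcases eq_or_ne u v with rfl | huv
  · exact not_adj_of_three_lt_girth hG hxy hyv hxu
  · exact hx (hS u hu v hv (.cons hxu.symm (.cons hxy hyv.toWalk))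
      (by simp [huv, hxu.ne', hyv.ne, hxy.ne, ne_of_mem_of_not_mem hu hy,
        (ne_of_mem_of_not_mem hv hx).symm]) (by simpa using hn) x (by simp))

theorem eq_of_common_adj (hS : AbsorbsPaths G S n) (hn : 4 ≤ n) (hG : 4 < G.girth)
    {x x' y u v : V} (hx : x ∉ S) (hx' : x' ∉ S) (hy : y ∉ S) (hu : u ∈ S) (hv : v ∈ S)
    (hyx : G.Adj y x) (hyx' : G.Adj y x') (hxu : G.Adj x u) (hxv : G.Adj x' v) : x = x' := by
  rcases eq_or_ne u v with rfl | huv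
  · exact eq_of_common_adj_of_four_lt_girth hG (ne_of_mem_of_not_mem hu hy).symm hyx hxu hyx' hxv
  by_contra hxx'
  exact hy (hS u hu v hv (.cons hxu.symm (.cons hyx.symm (.cons hyx' hxv.toWalk)))
    (by simp [huv, hxx', hxu.ne', hyx.ne', hyx'.ne, hxv.ne, ne_of_mem_of_not_mem hu hx',
      ne_of_mem_of_not_mem hu hy, (ne_of_mem_of_not_mem hv hx).symm,
      (ne_of_mem_of_not_mem hv hy).symm]) (by simpa using hn) y (by simp))

end AbsorbsPaths

end Girth

section CycleParametrization

variable {V : Type*} {G : SimpleGraph V} {w : V} {C : G.Walk w w}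

/-- The parametrization by `ℤ` of the vertices of the closed walk `C`, with period `C.length`. -/
def cyclicVertex (C : G.Walk w w) (i : ℤ) : V :=
  C.getVert (i % C.length).toNat

theorem cyclicVertex_mem_support (i : ℤ) : cyclicVertex C i ∈ C.support :=
  C.getVert_mem_support _

theorem cyclicVertex_natCast {n : ℕ} (hn : n ≤ C.length) : cyclicVertex C n = C.getVert n := by
  rcases hn.lt_or_eq with hlt | rfl
  · rw [cyclicVertex, Int.emod_eq_of_lt (by lia) (by lia), Int.toNat_natCast]
  · rw [cyclicVertex, Int.emod_self, Int.toNat_zero, C.getVert_zero, C.getVert_length]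

theorem range_cyclicVertex : Set.range (cyclicVertex C) = {z | z ∈ C.support} := by
  refine Set.Subset.antisymm (Set.range_subset_iff.2 cyclicVertex_mem_support) ?_
  intro z hz
  obtain ⟨n, rfl, hn⟩ := Walk.mem_support_iff_exists_getVert.1 hz
  exact ⟨n, cyclicVertex_natCast hn⟩

theorem cyclicVertex_eq_of_modEq {i j : ℤ} (hij : i ≡ j [ZMOD C.length]) :
    cyclicVertex C i = cyclicVertex C j :=
  congrArg (fun k : ℤ => C.getVert k.toNat) hij

theorem cyclicVertex_eq_iff (hC : C.IsCycle) {i j : ℤ} :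
    cyclicVertex C i = cyclicVertex C j ↔ i ≡ j [ZMOD C.length] := by
  refine ⟨fun h => ?_, cyclicVertex_eq_of_modEq⟩
  have hlen := hC.three_le_length
  obtain ⟨m, hm, hmi⟩ := Int.existsUnique_equiv_nat i (b := C.length) (by lia)
  obtain ⟨n, hn, hnj⟩ := Int.existsUnique_equiv_nat j (b := C.length) (by lia)
  rw [← cyclicVertex_eq_of_modEq hmi, ← cyclicVertex_eq_of_modEq hnj,
    cyclicVertex_natCast (by lia), cyclicVertex_natCast (by lia)] at h
  have hmn : m = n := hC.getVert_injOn' (show m ≤ C.length - 1 by lia)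
    (show n ≤ C.length - 1 by lia) h
  exact hmi.symm.trans (hmn ▸ hnj)

theorem mem_edges_iff_exists_cyclicVertex (hC : C.IsCycle) {u v : V} :
    s(u, v) ∈ C.edges ↔ ∃ i, s(cyclicVertex C i, cyclicVertex C (i + 1)) = s(u, v) := by
  rw [Walk.mk_mem_edges_iff_exists]
  constructor
  · rintro ⟨n, hlt, hn⟩
    exact ⟨n, by rwa [cyclicVertex_natCast hlt.le, ← Nat.cast_succ, cyclicVertex_natCast hlt]⟩
  · rintro ⟨i, hi⟩
    have hlen := hC.three_le_length
    obtain ⟨n, hlt, hn⟩ := Int.existsUnique_equiv_nat i (b := C.length) (by lia)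
    rw [Nat.cast_lt] at hlt
    refine ⟨n, hlt, ?_⟩
    rw [← hi, ← cyclicVertex_natCast hlt.le, ← cyclicVertex_natCast hlt, Nat.cast_succ,
      cyclicVertex_eq_of_modEq hn, cyclicVertex_eq_of_modEq (hn.add_right 1)]

theorem isInducedCycle_cyclicVertex (hC : C.IsCycle) (hCg : C.length + 2 < 2 * G.girth) :
    IsInducedCycle G {z | z ∈ C.support} C.length (cyclicVertex C) where
  eq_iff i j := cyclicVertex_eq_iff hC
  adj i := C.adj_of_mem_edges ((mem_edges_iff_exists_cyclicVertex hC).2 ⟨i, rfl⟩)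
  eq_or_eq_of_adj i j hij := by
    obtain ⟨k, hk⟩ := (mem_edges_iff_exists_cyclicVertex hC).1
      (mem_edges_of_adj hC hCg (cyclicVertex_mem_support i) (cyclicVertex_mem_support j) hij)
    rcases Sym2.eq_iff.1 hk with ⟨hki, hkj⟩ | ⟨hkj, hki⟩
    · exact Or.inl (hkj ▸ cyclicVertex_eq_of_modEq (((cyclicVertex_eq_iff hC).1 hki).add_right 1))
    · refine Or.inr (hkj ▸ cyclicVertex_eq_of_modEq ?_)
      simpa only [add_sub_cancel_right] using ((cyclicVertex_eq_iff hC).1 hki).sub_right 1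
  range_eq := range_cyclicVertex

end CycleParametrization

section Minimality

variable {V : Type*} {G : SimpleGraph V} {S : Set V}

/-- `G` is well-indumatched, and it has no other well-indumatched induced subgraph containing `S`.
For `S` the vertex set of a shortest cycle, every such subgraph has the same girth as `G`. -/
structure IsMinimalWellIndumatchedOver (G : SimpleGraph V) (S : Set V) : Prop where
  wellIndumatched : WellIndumatched G
  not_wellIndumatched_induce : ∀ s, S ⊆ s → s ≠ Set.univ → ¬ WellIndumatched (G.induce s)

namespace IsMinimalWellIndumatchedOver

variable [Finite V]

theorem exists_mem_eq_or_adj (h : IsMinimalWellIndumatchedOver G S) {u w : V} (huw : G.Adj u w) :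
    ∃ z ∈ S, (u = z ∨ G.Adj u z) ∨ (w = z ∨ G.Adj w z) := by
  by_contra! hfar
  refine h.not_wellIndumatched_induce _ ?_ ?_
    (h.wellIndumatched.induce_farFrom (IsInducedMatching.singleton (e := s(u, w)) huw))
  · rintro z hz _ rfl v hv
    rcases Sym2.mem_iff.1 hv with rfl | rfl
    exacts [(hfar z hz).1, (hfar z hz).2]
  · refine (Set.ne_univ_iff_exists_notMem _).2 ⟨u, fun hu => ?_⟩
    exact (hu _ rfl u (Sym2.mem_mk_left u w)).1 rfl

theorem mem_of_forall_adj (h : IsMinimalWellIndumatchedOver G S) {b : V}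
    (hb : ∀ z, G.Adj b z → ∃ e ∈ G.edgeSet, b ∉ e ∧
      ∀ f ∈ G.edgeSet, FarApart G s(b, z) f → FarApart G e f) : b ∈ S := by
  by_contra hbS
  refine h.not_wellIndumatched_induce {b}ᶜ (Set.subset_compl_singleton_iff.2 hbS) ?_
    (h.wellIndumatched.induce_compl_singleton hb)
  exact Set.compl_ne_univ.2 (Set.singleton_nonempty b)

theorem exists_adj (h : IsMinimalWellIndumatchedOver G S) {b : V} (hb : b ∉ S) :
    ∃ z, G.Adj b z := by
  by_contra! hbz
  exact hb (h.mem_of_forall_adj fun z hz => absurd hz (hbz z))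

theorem eq_of_neighborSet_eq (h : IsMinimalWellIndumatchedOver G S) {x y : V} (hy : y ∉ S)
    (hxy : G.neighborSet x = G.neighborSet y) : x = y := by
  by_contra hne
  have hadj (z : V) : G.Adj x z ↔ G.Adj y z := Set.ext_iff.1 hxy z
  refine hy (h.mem_of_forall_adj fun z hyz => ⟨s(x, z), (hadj z).2 hyz, ?_, fun f hf hfar => ?_⟩)
  · simp [Ne.symm hne, hyz.ne]
  rw [FarApart.mk_iff] at hfar ⊢
  refine fun v hv => ⟨⟨?_, (hadj v).not.2 (hfar v hv).1.2⟩, (hfar v hv).2⟩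
  rintro rfl
  obtain ⟨t, rfl⟩ := hv
  exact (hfar t (Sym2.mem_mk_right x t)).1.2 ((hadj t).1 hf)

theorem eq_of_pendantLeaf_of_pendantLeaf (h : IsMinimalWellIndumatchedOver G S) {v b b' : V}
    (hb : IsPendantLeaf G v b) (hb' : IsPendantLeaf G v b') (hbS : b' ∉ S) : b = b' :=
  h.eq_of_neighborSet_eq hbS (hb.neighborSet_eq.trans hb'.neighborSet_eq.symm)

theorem eq_of_pendantLeaf_of_pendantPath (h : IsMinimalWellIndumatchedOver G S) {v b x y : V}
    (hb : IsPendantLeaf G v b) (hbS : b ∉ S) (hxy : IsPendantPath G v x y) : b = x := by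
  by_contra hbx
  refine hbS (h.mem_of_forall_adj fun z hbz => ⟨s(x, y), hxy.isPendantLeaf.adj, ?_, ?_⟩)
  · rw [Sym2.mem_iff]
    rintro (rfl | rfl)
    · exact hbx rfl
    · exact hxy.adj.ne (hxy.isPendantLeaf.eq_of_adj v hb.adj.symm)
  · obtain rfl := hb.eq_of_adj z hbz
    intro f hf hfar
    induction f with | _ p q
    have hz := fun t ht => ((FarApart.mk_iff.1 hfar) t ht).2
    have hzx {t} (ht : t ∈ s(p, q)) : z ≠ t ∧ x ≠ t :=
      ⟨(hz t ht).1, fun hxt => (hz t ht).2 (hxt ▸ hxy.adj)⟩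
    exact hxy.farApart hf (hzx (Sym2.mem_mk_left p q)) (hzx (Sym2.mem_mk_right p q))

theorem isPendantLeaf_of_adj_of_adj (h : IsMinimalWellIndumatchedOver G S)
    (hS : AbsorbsPaths G S 4) (hG : 4 < G.girth) {v x y : V} (hv : v ∈ S) (hx : x ∉ S)
    (hvx : G.Adj v x) (hxy : G.Adj x y) (hyv : y ≠ v) : y ∉ S ∧ IsPendantLeaf G x y := by
  have hyS : y ∉ S := fun hy => hyv (hS.eq_of_adj_of_adj (by lia) hx hy hv hxy hvx.symm)
  have hyN {z} (hz : z ∈ S) : ¬ G.Adj y z := fun hyz =>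
    hS.not_adj_of_adj_of_adj (by lia) (by lia) hx hyS hv hz hvx.symm hyz hxy
  refine ⟨hyS, hxy, fun w hyw => ?_⟩
  have hwS : w ∉ S := fun hw => hyN hw hyw
  obtain ⟨z, hz, (rfl | hyz) | (rfl | hwz)⟩ := h.exists_mem_eq_or_adj hyw
  · exact absurd hz hyS
  · exact absurd hyz (hyN hz)
  · exact absurd hz hwS
  · exact hS.eq_of_common_adj le_rfl hG hwS hx hyS hz hv hyw hxy.symm hwz hvx.symm

theorem isPendantLeaf_or_exists_isPendantPath (h : IsMinimalWellIndumatchedOver G S)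
    (hS : AbsorbsPaths G S 4) (hG : 4 < G.girth) {v x : V} (hv : v ∈ S) (hx : x ∉ S)
    (hvx : G.Adj v x) : IsPendantLeaf G v x ∨ ∃ y ∉ S, IsPendantPath G v x y := by
  by_cases hleaf : ∀ z, G.Adj x z → z = v
  · exact Or.inl ⟨hvx, hleaf⟩
  push Not at hleaf
  obtain ⟨y, hxy, hyv⟩ := hleaf
  obtain ⟨hyS, hy⟩ := h.isPendantLeaf_of_adj_of_adj hS hG hv hx hvx hxy hyv
  refine Or.inr ⟨y, hyS, hvx, hy, hyv.symm, fun z hxz => or_iff_not_imp_left.2 fun hzv => ?_⟩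
  exact h.eq_of_pendantLeaf_of_pendantLeaf
    (h.isPendantLeaf_of_adj_of_adj hS hG hv hx hvx hxz hzv).2 hy hyS

theorem isBare_or_hasPendantLeaf_or_hasPendantPath (h : IsMinimalWellIndumatchedOver G S)
    (hS : AbsorbsPaths G S 4) (hG : 4 < G.girth) {v : V} (hv : v ∈ S) :
    IsBare G S v ∨ HasPendantLeaf G S v ∨ HasPendantPath G S v := by
  refine or_iff_not_imp_left.2 fun hbare => ?_
  simp only [IsBare, not_forall] at hbare
  obtain ⟨x, hvx, hx⟩ := hbare
  rcases h.isPendantLeaf_or_exists_isPendantPath hS hG hv hx hvx with hleaf | ⟨y, hy, hxy⟩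
  · refine Or.inl ⟨x, hx, hleaf, fun z hvz => or_iff_not_imp_left.2 fun hz => ?_⟩
    rcases h.isPendantLeaf_or_exists_isPendantPath hS hG hv hz hvz with hz' | ⟨y, -, hzy⟩
    · exact h.eq_of_pendantLeaf_of_pendantLeaf hz' hleaf hx
    · exact (h.eq_of_pendantLeaf_of_pendantPath hleaf hx hzy).symm
  · refine Or.inr ⟨x, hx, y, hy, hxy, fun z hvz => or_iff_not_imp_left.2 fun hz => ?_⟩
    rcases h.isPendantLeaf_or_exists_isPendantPath hS hG hv hz hvz with hz' | ⟨y', -, hzy'⟩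
    · exact h.eq_of_pendantLeaf_of_pendantPath hz' hz hxy
    · exact h.wellIndumatched.eq_of_pendantPath_of_pendantPath hzy' hxy

theorem isBare_or_hasPendantPath (h : IsMinimalWellIndumatchedOver G S) (hS : AbsorbsPaths G S 4)
    (hG : 4 < G.girth) {g : ℕ} (hg : 9 ≤ g) {c : ℤ → V} (hc : IsInducedCycle G S g c) {v : V}
    (hv : v ∈ S) : IsBare G S v ∨ HasPendantPath G S v := by
  have htri {u} (hu : u ∈ S) := h.isBare_or_hasPendantLeaf_or_hasPendantPath hS hG hu
  exact (htri hv).imp_right fun h' =>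
    h'.resolve_left (hc.not_hasPendantLeaf h.wellIndumatched hg (fun _ => htri) hv)

theorem exists_isPendantPath_of_notMem (h : IsMinimalWellIndumatchedOver G S)
    (hfringe : ∀ v ∈ S, IsBare G S v ∨ HasPendantPath G S v) {w : V} (hw : w ∉ S) :
    ∃ v ∈ S, ∃ x y, IsPendantPath G v x y ∧ (w = x ∨ w = y) := by
  have hpath {v u} (hv : v ∈ S) (hu : u ∉ S) (huv : G.Adj u v) : ∃ y, IsPendantPath G v u y := by
    rcases hfringe v hv with hbare | ⟨x, -, y, -, hxy, hx⟩
    · exact absurd (hbare u huv.symm) hu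
    · obtain rfl := (hx u huv.symm).resolve_left hu
      exact ⟨y, hxy⟩
  have hself {v} (hv : v ∈ S) (hwv : G.Adj w v) :
      ∃ v ∈ S, ∃ x y, IsPendantPath G v x y ∧ (w = x ∨ w = y) :=
    let ⟨y, hy⟩ := hpath hv hw hwv
    ⟨v, hv, w, y, hy, Or.inl rfl⟩
  obtain ⟨u, hwu⟩ := h.exists_adj hw
  by_cases hu : u ∈ S
  · exact hself hu hwu
  obtain ⟨v, hv, (rfl | hwv) | (rfl | huv)⟩ := h.exists_mem_eq_or_adj hwu
  · exact absurd hv hw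
  · exact hself hv hwv
  · exact absurd hv hu
  · obtain ⟨y, hy⟩ := hpath hv hu huv
    have hwy : w = y := (hy.eq_or_eq_of_adj w hwu.symm).resolve_left fun hwv => hw (hwv ▸ hv)
    exact ⟨v, hv, u, y, hy, Or.inr hwy⟩

theorem reduced (h : IsMinimalWellIndumatchedOver G S) (hG : 4 < G.girth) {g : ℕ} (hg : 2 < g)
    {c : ℤ → V} (hc : IsInducedCycle G S g c) : Reduced G := by
  intro x y hxy
  by_cases hy : y ∈ S
  · by_cases hx : x ∈ S
    · by_contra hne
      have hadj (z : V) (hxz : G.Adj x z) : G.Adj z y :=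
        ((Set.ext_iff.1 hxy z).1 hxz).symm
      obtain ⟨i, rfl⟩ := hc.range_eq ▸ hx
      have hsucc := hc.adj i
      have hpred := hc.adj_sub_one i
      exact hc.ne (by lia) (by lia)
        (eq_of_common_adj_of_four_lt_girth hG hne hpred (hadj _ hpred) hsucc (hadj _ hsucc))
    · exact (h.eq_of_neighborSet_eq hx hxy.symm).symm
  · exact h.eq_of_neighborSet_eq hy hxy

end IsMinimalWellIndumatchedOver

end Minimality
section HangingTrees

variable {V : Type*} {G : SimpleGraph V}

theorem IsPendantLeaf.notMem_support_of_isCycle {v b w : V} {C : G.Walk w w}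
    (hb : IsPendantLeaf G v b) (hC : C.IsCycle) : b ∉ C.support := by
  intro hbC
  have htwo := hC.ncard_neighborSet_toSubgraph_eq_two hbC
  have hle : (C.toSubgraph.neighborSet b).ncard ≤ ({v} : Set V).ncard :=
    Set.ncard_le_ncard fun z hz => hb.eq_of_adj z (C.toSubgraph.adj_sub hz)
  rw [Set.ncard_singleton] at hle
  lia

theorem IsPendantPath.notMem_support_of_isCycle {v x y w : V} {C : G.Walk w w}
    (hxy : IsPendantPath G v x y) (hC : C.IsCycle) : x ∉ C.support := by
  intro hxC
  have htwo := hC.ncard_neighborSet_toSubgraph_eq_two hxC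
  have hle : (C.toSubgraph.neighborSet x).ncard ≤ ({v} : Set V).ncard := by
    refine Set.ncard_le_ncard fun z hz => ?_
    refine (hxy.eq_or_eq_of_adj z (C.toSubgraph.adj_sub hz)).resolve_right ?_
    rintro rfl
    exact hxy.isPendantLeaf.notMem_support_of_isCycle hC
      (C.mem_verts_toSubgraph.1 (C.toSubgraph.edge_vert hz.symm))
  rw [Set.ncard_singleton] at hle
  lia

theorem mem_edges_iff_of_support_subset {v w : V} {C : G.Walk v v} {D : G.Walk w w}
    (hC : C.IsCycle) (hCg : C.length = G.girth) (hD : D.IsCycle) (hDC : D.support ⊆ C.support)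
    (e : Sym2 V) : e ∈ D.edges ↔ e ∈ C.edges := by
  have hsub : D.edges ⊆ C.edges := by
    intro e he
    induction e with | _ a b
    have := hC.three_le_length
    exact mem_edges_of_adj hC (by lia) (hDC (D.fst_mem_support_of_mem_edges he))
      (hDC (D.snd_mem_support_of_mem_edges he)) (D.edges_subset_edgeSet he)
  have hle : C.edges.length ≤ D.edges.length := by
    rw [Walk.length_edges, Walk.length_edges, hCg]
    exact girth_le_length hD
  exact ((hD.edges_nodup.subperm hsub).perm_of_length_le hle).mem_iff

theorem supp_connectedComponentMk_subset {v : V} {A : Set V} (hv : v ∈ A)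
    (hA : ∀ a ∈ A, ∀ b, G.Adj a b → b ∈ A) : (G.connectedComponentMk v).supp ⊆ A := by
  intro w hw
  by_contra hwA
  obtain ⟨p⟩ := (ConnectedComponent.exact hw).symm
  obtain ⟨d, -, hd, hd'⟩ := p.exists_boundary_dart A hv hwA
  exact hd' (hA _ hd _ d.adj)

theorem typeI_of_isBare {v w : V} {C : G.Walk v v} (hC : C.IsCycle)
    (hCg : C.length + 2 < 2 * G.girth) (hw : w ∈ C.support)
    (hbare : IsBare G {z | z ∈ C.support} w) : TypeI (G.deleteEdges {e | e ∈ C.edges}) w := by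
  refine Set.Subset.antisymm (supp_connectedComponentMk_subset rfl ?_)
    (Set.singleton_subset_iff.2 rfl)
  rintro _ rfl b hb
  rw [deleteEdges_adj] at hb
  exact absurd (mem_edges_of_adj hC hCg hw (hbare b hb.1) hb.1) hb.2

theorem typeII_of_hasPendantPath {v w : V} {C : G.Walk v v} (hC : C.IsCycle)
    (hCg : C.length + 2 < 2 * G.girth) (hw : w ∈ C.support)
    (hpath : HasPendantPath G {z | z ∈ C.support} w) :
    TypeII (G.deleteEdges {e | e ∈ C.edges}) w := by
  obtain ⟨x, hx, y, -, hxy, hwx⟩ := hpath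
  have hadj {u} (hxu : G.Adj x u) : (G.deleteEdges {e | e ∈ C.edges}).Adj x u :=
    deleteEdges_adj.2 ⟨hxu, fun he => hx (C.fst_mem_support_of_mem_edges he)⟩
  have hxw := hadj hxy.adj.symm
  have hxy' := hadj hxy.isPendantLeaf.adj
  refine ⟨x, y, hxy'.ne, hxw.ne', hxy.ne, Set.Subset.antisymm ?_ ?_, hxw.symm, hxy', fun hwy =>
    hxw.ne' (hxy.isPendantLeaf.eq_of_adj w hwy.1.symm)⟩
  · refine supp_connectedComponentMk_subset (Set.mem_insert _ _) ?_
    rintro _ (rfl | rfl | rfl) b hb <;> rw [deleteEdges_adj] at hb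
    · rcases hwx b hb.1 with hbC | rfl
      · exact absurd (mem_edges_of_adj hC hCg hw hbC hb.1) hb.2
      · simp
    · rcases hxy.eq_or_eq_of_adj b hb.1 with rfl | rfl <;> simp
    · simp [hxy.isPendantLeaf.eq_of_adj b hb.1]
  · rintro _ (rfl | rfl | rfl)
    · rfl
    · exact ConnectedComponent.sound hxw.reachable
    · exact ConnectedComponent.sound (hxy'.symm.reachable.trans hxw.reachable)

end HangingTrees

section ShortestCycle

variable {V : Type*} {G : SimpleGraph V} {v : V} {C : G.Walk v v}

theorem girth_induce_of_support_subset (hC : C.IsCycle) (hCg : C.length = G.girth) {s : Set V}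
    (hs : ∀ z ∈ C.support, z ∈ s) : (G.induce s).girth = G.girth := by
  have hmap : (C.induce s hs).map (Embedding.induce s).toHom = C := C.map_induce hs
  have hcycle : (C.induce s hs).IsCycle := Walk.IsCycle.of_map (hmap.symm ▸ hC)
  have hlength : (C.induce s hs).length = C.length :=
    (Walk.length_map _ _).symm.trans (congrArg Walk.length hmap)
  refine le_antisymm ?_ ?_
  · exact (girth_le_length hcycle).trans_eq (hlength.trans hCg)
  · exact IsContained.girth_le ⟨(Embedding.induce s).toCopy⟩ fun h => h _ hcycle

theorem isMinimalWellIndumatchedOver_support (hC : C.IsCycle) (hCg : C.length = G.girth)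
    (hG : WellIndumatched G) (hmin : ∀ s : Set V, s ≠ Set.univ →
      ¬ (WellIndumatched (G.induce s) ∧ (G.induce s).girth = G.girth)) :
    IsMinimalWellIndumatchedOver G {z | z ∈ C.support} :=
  ⟨hG, fun s hs hne hW => hmin s hne ⟨hW, girth_induce_of_support_subset hC hCg hs⟩⟩

namespace IsMinimalWellIndumatchedOver

variable [Finite V]

theorem connected (h : IsMinimalWellIndumatchedOver G {z | z ∈ C.support})
    (hfringe : ∀ w ∈ C.support, IsBare G {z | z ∈ C.support} w ∨
      HasPendantPath G {z | z ∈ C.support} w) : G.Connected := by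
  classical
  refine (connected_iff_exists_forall_reachable G).2 ⟨v, fun w => ?_⟩
  by_cases hw : w ∈ C.support
  · exact (C.takeUntil w hw).reachable
  · obtain ⟨u, hu, x, y, hxy, hwxy⟩ := h.exists_isPendantPath_of_notMem hfringe hw
    have hx : G.Reachable v x := (C.takeUntil u hu).reachable.trans hxy.adj.reachable
    rcases hwxy with rfl | rfl
    exacts [hx, hx.trans hxy.isPendantLeaf.adj.reachable]

theorem mem_edges_iff_of_isCycle (h : IsMinimalWellIndumatchedOver G {z | z ∈ C.support})
    (hC : C.IsCycle) (hCg : C.length = G.girth)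
    (hfringe : ∀ w ∈ C.support, IsBare G {z | z ∈ C.support} w ∨
      HasPendantPath G {z | z ∈ C.support} w) {w : V} {D : G.Walk w w} (hD : D.IsCycle)
    (e : Sym2 V) : e ∈ D.edges ↔ e ∈ C.edges := by
  refine mem_edges_iff_of_support_subset hC hCg hD (fun z hz => ?_) e
  by_contra hzC
  obtain ⟨u, -, x, y, hxy, rfl | rfl⟩ := h.exists_isPendantPath_of_notMem hfringe hzC
  exacts [hxy.notMem_support_of_isCycle hD hz, hxy.isPendantLeaf.notMem_support_of_isCycle hD hz]

end IsMinimalWellIndumatchedOver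

end ShortestCycle

theorem stmt_11_general {V : Type*} [Finite V] (G : SimpleGraph V) (g : ℕ) (hg : 9 ≤ g)
    (hgirth : G.girth = g) (hWIM : WellIndumatched G)
    (hmin : ∀ s : Set V, s ≠ Set.univ →
      ¬ (WellIndumatched (G.induce s) ∧ (G.induce s).girth = g)) :
    Reduced G ∧ G.Connected ∧
      ∃ (v : V) (C : G.Walk v v), C.IsCycle ∧ C.length = g ∧
        (∀ (w : V) (D : G.Walk w w), D.IsCycle → ∀ e, e ∈ D.edges ↔ e ∈ C.edges) ∧
        ∀ w ∈ C.support,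
          TypeI (G.deleteEdges {e | e ∈ C.edges}) w ∨
            TypeII (G.deleteEdges {e | e ∈ C.edges}) w := by
  subst hgirth
  obtain ⟨v, C, hC, hCg⟩ := exists_girth_eq_length.2 fun h => by
    rw [girth_eq_zero.2 h] at hg
    lia
  have hmin' := isMinimalWellIndumatchedOver_support hC hCg.symm hWIM hmin
  have hcyclic := isInducedCycle_cyclicVertex hC (by lia)
  have hfringe (w : V) (hw : w ∈ C.support) :=
    hmin'.isBare_or_hasPendantPath (absorbsPaths_support hC (by lia)) (by lia)
      (hCg ▸ hg) hcyclic hw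
  refine ⟨hmin'.reduced (by lia) (by lia) hcyclic, hmin'.connected hfringe, v, C, hC, hCg.symm,
    fun w D hD => hmin'.mem_edges_iff_of_isCycle hC hCg.symm hfringe hD, fun w hw => ?_⟩
  exact (hfringe w hw).imp (typeI_of_isBare hC (by lia) hw)
    (typeII_of_hasPendantPath hC (by lia) hw)

/-- If `G` is a minimal well-indumatched graph of girth `g ≥ 9` (no proper subgraph is a
well-indumatched graph of girth `g`), then `G` is a reduced unicyclic graph whose unique
cycle `C` has length `g`, and every rooted tree `T_v`, `v ∈ C`, i.e. the component of
`v` in `G − E(C)`, is of Type (i) or Type (ii). -/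
theorem stmt_11 {V : Type*} [Fintype V] (G : SimpleGraph V) (g : ℕ) (hg : 9 ≤ g)
    (hgirth : G.girth = g) (hWIM : WellIndumatched G)
    (hmin : ∀ H : G.Subgraph, H ≠ ⊤ →
      ¬ (WellIndumatched H.coe ∧ H.coe.girth = g)) :
    Reduced G ∧ G.Connected ∧
      ∃ (v : V) (C : G.Walk v v), C.IsCycle ∧ C.length = g ∧
        (∀ (w : V) (D : G.Walk w w), D.IsCycle → ∀ e, e ∈ D.edges ↔ e ∈ C.edges) ∧
        ∀ w ∈ C.support,
          TypeI (G.deleteEdges {e | e ∈ C.edges}) w ∨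
            TypeII (G.deleteEdges {e | e ∈ C.edges}) w := by
  refine stmt_11_general G g hg hgirth hWIM fun s hs h => ?_
  exact hmin ((⊤ : G.Subgraph).induce s) (fun htop => hs (congrArg Subgraph.verts htop)) <| by
    rwa [← induce_eq_coe_induce_top]
end

section
/- There is no well-indumatched graph of girth 9, i.e., no well-indumatched graph whose shortest cycle has length 9. -/
open SimpleGraph

/-! Delete from `G` a maximal induced matching among those with no edge touching a shortest cycle
`c`, together with all edges in conflict with it. The remaining graph is again well-indumatched. As
short cycles are absent, it consists of `c` and of trees of depth at most two hanging off `c`.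
Exchanging a set of pairwise non-conflicting edges for a larger one is impossible in a
well-indumatched graph if every edge in conflict with the new set is in conflict with the old one.
Such exchanges show that trees of depth two never sit at neighbouring vertices of `c`, and that the
vertices carrying one are closed under `i ↦ i + 2`. Since `5 * 2 = 1` modulo `9`, there are none.
So every edge meets `c`. If some vertex of `c` carries no tree, some maximal induced matching has
two edges and another at least three; if every vertex carries one, some has three edges and another
at least four. -/

section Conflict

variable {V : Type*} {G : SimpleGraph V} {e f : Sym2 V} {u v : V} {M : Set (Sym2 V)}

/-- `e` has an endpoint in the closed neighbourhood of `v`. -/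
def EdgeTouches (G : SimpleGraph V) (e : Sym2 V) (v : V) : Prop :=
  ∃ u ∈ e, u = v ∨ G.Adj u v

/-- `e` and `f` share an endpoint or have endpoints joined by an edge of `G`: they cannot both
belong to an induced matching, unless `e = f`. -/
def EdgesConflict (G : SimpleGraph V) (e f : Sym2 V) : Prop :=
  ∃ v ∈ f, EdgeTouches G e v

theorem EdgeTouches.of_mem (h : v ∈ e) : EdgeTouches G e v :=
  ⟨v, h, Or.inl rfl⟩

theorem EdgeTouches.of_adj (h : u ∈ e) (huv : G.Adj u v) : EdgeTouches G e v :=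
  ⟨u, h, Or.inr huv⟩

theorem edgeTouches_mk {a b : V} :
    EdgeTouches G s(a, b) v ↔ (a = v ∨ G.Adj a v) ∨ b = v ∨ G.Adj b v := by
  simp [EdgeTouches]

theorem edgesConflict_mk : EdgesConflict G e s(u, v) ↔ EdgeTouches G e u ∨ EdgeTouches G e v := by
  simp [EdgesConflict]

theorem EdgesConflict.refl (e : Sym2 V) : EdgesConflict G e e :=
  ⟨_, e.out_fst_mem, .of_mem e.out_fst_mem⟩

theorem EdgesConflict.symm (h : EdgesConflict G e f) : EdgesConflict G f e := by
  obtain ⟨v, hv, u, hu, huv⟩ := h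
  exact ⟨u, hu, v, hv, huv.imp Eq.symm Adj.symm⟩

instance : Std.Symm fun e f ↦ ¬ EdgesConflict G e f :=
  ⟨fun _ _ h hc ↦ h hc.symm⟩

theorem isInducedMatching_iff_pairwise :
    IsInducedMatching G M ↔ M ⊆ G.edgeSet ∧ M.Pairwise fun e f ↦ ¬ EdgesConflict G e f := by
  refine and_congr_right fun _ ↦ forall₅_congr fun e _ f _ _ ↦ ?_
  simp only [EdgesConflict, EdgeTouches]
  grind

theorem IsInducedMatching.eq_of_edgesConflict (hM : IsInducedMatching G M) (he : e ∈ M)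
    (hf : f ∈ M) (h : EdgesConflict G e f) : e = f :=
  (isInducedMatching_iff_pairwise.mp hM).2.eq he hf (not_not.mpr h)

theorem IsInducedMatching.mono_s13 {N : Set (Sym2 V)} (hN : IsInducedMatching G N) (h : M ⊆ N) :
    IsInducedMatching G M :=
  ⟨h.trans hN.1, fun e he f hf ↦ hN.2 e (h he) f (h hf)⟩

theorem IsInducedMatching.union_s13 {N : Set (Sym2 V)} (hM : IsInducedMatching G M)
    (hN : IsInducedMatching G N) (h : ∀ e ∈ M, ∀ f ∈ N, ¬ EdgesConflict G e f) :
    IsInducedMatching G (M ∪ N) := by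
  rw [isInducedMatching_iff_pairwise] at hM hN ⊢
  exact ⟨Set.union_subset hM.1 hN.1, Set.pairwise_union_of_symm.mpr
    ⟨hM.2, hN.2, fun e he f hf _ ↦ h e he f hf⟩⟩

theorem disjoint_of_forall_not_edgesConflict {N : Set (Sym2 V)}
    (h : ∀ e ∈ M, ∀ f ∈ N, ¬ EdgesConflict G e f) : Disjoint M N :=
  Set.disjoint_left.mpr fun e hM hN ↦ h e hM e hN (.refl e)

theorem isInducedMatching_singleton (he : e ∈ G.edgeSet) : IsInducedMatching G {e} :=
  isInducedMatching_iff_pairwise.mpr ⟨Set.singleton_subset_iff.mpr he, Set.pairwise_singleton _ _⟩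

theorem isInducedMatching_of_list_pairwise {l : List (Sym2 V)} (hl : ∀ e ∈ l, e ∈ G.edgeSet)
    (h : l.Pairwise fun e f ↦ ¬ EdgesConflict G e f) :
    IsInducedMatching G {e | e ∈ l} ∧ {e | e ∈ l}.ncard = l.length := by
  classical
  have hnodup : l.Nodup := h.imp (by rintro e _ he rfl; exact he (.refl e))
  refine ⟨isInducedMatching_iff_pairwise.mpr ⟨hl, hnodup.pairwise_coe.mpr h⟩, ?_⟩
  rw [← List.coe_toFinset, Set.ncard_coe_finset, List.toFinset_card_of_nodup hnodup]

theorem IsInducedMatching.exists_maximal_superset [Finite V] (hM : IsInducedMatching G M) :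
    ∃ N, M ⊆ N ∧ IsMaximalInducedMatching G N := by
  obtain ⟨N, hMN, hN⟩ := (Set.toFinite {N | IsInducedMatching G N}).exists_le_maximal hM
  exact ⟨N, hMN, hN.prop, fun N' hN' hNN' ↦ (hN.le_of_ge hN' hNN').antisymm hNN'⟩

/-- Replace `P` by `Q` in a maximal induced matching containing `P`. -/
theorem WellIndumatched.ncard_le_ncard [Finite V] (hG : WellIndumatched G) {P Q : Set (Sym2 V)}
    (hP : IsInducedMatching G P) (hQ : IsInducedMatching G Q)
    (hPQ : ∀ e ∈ G.edgeSet, ∀ q ∈ Q, EdgesConflict G e q → ∃ p ∈ P, EdgesConflict G e p) :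
    Q.ncard ≤ P.ncard := by
  obtain ⟨M, hPM, hM⟩ := hP.exists_maximal_superset
  have hQM : ∀ q ∈ Q, ∀ e ∈ M \ P, ¬ EdgesConflict G q e := by
    rintro q hq e ⟨heM, heP⟩ hqe
    obtain ⟨p, hp, hep⟩ := hPQ e (hM.1.1 heM) q hq hqe.symm
    exact heP (hM.1.eq_of_edgesConflict heM (hPM hp) hep ▸ hp)
  obtain ⟨M', hQM', hM'⟩ := (hQ.union_s13 (hM.1.mono_s13 Set.sdiff_subset) hQM).exists_maximal_superset
  have hle := Set.ncard_le_ncard hQM'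
  rw [Set.ncard_union_eq (disjoint_of_forall_not_edgesConflict hQM), ← hG M M' hM hM',
    ← Set.ncard_sdiff_add_ncard_of_subset hPM] at hle
  omega

theorem WellIndumatched.length_le_length [Finite V] (hG : WellIndumatched G) {p q : List (Sym2 V)}
    (hpG : ∀ e ∈ p, e ∈ G.edgeSet) (hp : p.Pairwise fun e f ↦ ¬ EdgesConflict G e f)
    (hqG : ∀ e ∈ q, e ∈ G.edgeSet) (hq : q.Pairwise fun e f ↦ ¬ EdgesConflict G e f)
    (hpq : ∀ e ∈ G.edgeSet, ∀ b ∈ q, EdgesConflict G e b → ∃ a ∈ p, EdgesConflict G e a) :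
    q.length ≤ p.length := by
  obtain ⟨hP, hPcard⟩ := isInducedMatching_of_list_pairwise hpG hp
  obtain ⟨hQ, hQcard⟩ := isInducedMatching_of_list_pairwise hqG hq
  exact hPcard ▸ hQcard ▸ hG.ncard_le_ncard hP hQ hpq

end Conflict

section Link

variable {V : Type*} {G : SimpleGraph V} {T M : Set (Sym2 V)} {e f : Sym2 V} {u v : V}

/-- The graph that remains when all edges in conflict with `T` are deleted: up to isolated
vertices, the subgraph induced outside the closed neighbourhood of the vertices covered by `T`. -/
def awayFrom (G : SimpleGraph V) (T : Set (Sym2 V)) : SimpleGraph V :=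
  G.deleteEdges {e | ∃ t ∈ T, EdgesConflict G e t}

theorem mem_edgeSet_awayFrom :
    e ∈ (awayFrom G T).edgeSet ↔ e ∈ G.edgeSet ∧ ∀ t ∈ T, ¬ EdgesConflict G e t := by
  simp [awayFrom, edgeSet_deleteEdges]

theorem awayFrom_le (T : Set (Sym2 V)) : awayFrom G T ≤ G :=
  deleteEdges_le _

theorem awayFrom_adj_of_mem_edges (he : e ∈ (awayFrom G T).edgeSet)
    (hf : f ∈ (awayFrom G T).edgeSet) (hu : u ∈ e) (hv : v ∈ f) :
    (awayFrom G T).Adj u v ↔ G.Adj u v := by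
  refine ⟨fun h ↦ awayFrom_le T h, fun h ↦ (mem_edgeSet_awayFrom (e := s(u, v))).mpr ⟨h, ?_⟩⟩
  rintro t ht ⟨w, hw, a, ha, haw⟩
  rcases Sym2.mem_iff.mp ha with rfl | rfl
  · exact (mem_edgeSet_awayFrom.mp he).2 t ht ⟨w, hw, a, hu, haw⟩
  · exact (mem_edgeSet_awayFrom.mp hf).2 t ht ⟨w, hw, a, hv, haw⟩

theorem edgesConflict_awayFrom (he : e ∈ (awayFrom G T).edgeSet)
    (hf : f ∈ (awayFrom G T).edgeSet) :
    EdgesConflict (awayFrom G T) e f ↔ EdgesConflict G e f :=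
  exists_congr fun _ ↦ and_congr_right fun hv ↦ exists_congr fun _ ↦ and_congr_right fun hu ↦
    or_congr_right (awayFrom_adj_of_mem_edges he hf hu hv)

theorem isInducedMatching_awayFrom : IsInducedMatching (awayFrom G T) M ↔
    IsInducedMatching G M ∧ ∀ e ∈ M, ∀ t ∈ T, ¬ EdgesConflict G e t := by
  have hsub : M ⊆ (awayFrom G T).edgeSet ↔
      M ⊆ G.edgeSet ∧ ∀ e ∈ M, ∀ t ∈ T, ¬ EdgesConflict G e t := by
    simp only [Set.subset_def, mem_edgeSet_awayFrom, forall_and]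
  rw [isInducedMatching_iff_pairwise, isInducedMatching_iff_pairwise, and_right_comm, ← hsub]
  refine and_congr_right fun hM ↦ forall₅_congr fun e he f hf _ ↦
    not_congr (edgesConflict_awayFrom (hM he) (hM hf))

theorem IsMaximalInducedMatching.union_of_awayFrom (hT : IsInducedMatching G T)
    (hM : IsMaximalInducedMatching (awayFrom G T) M) : IsMaximalInducedMatching G (M ∪ T) := by
  obtain ⟨hMG, hMT⟩ := isInducedMatching_awayFrom.mp hM.1
  refine ⟨hMG.union_s13 hT hMT, fun N hN hMTN ↦ ?_⟩
  obtain ⟨hMN, hTN⟩ := Set.union_subset_iff.mp hMTN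
  have hNT : IsInducedMatching (awayFrom G T) (N \ T) :=
    isInducedMatching_awayFrom.mpr ⟨hN.mono_s13 Set.sdiff_subset, fun e he t ht het ↦
      he.2 (hN.eq_of_edgesConflict he.1 (hTN ht) het ▸ ht)⟩
  have hMNT : M ⊆ N \ T :=
    Set.subset_sdiff.mpr ⟨hMN, disjoint_of_forall_not_edgesConflict hMT⟩
  rw [← hM.2 _ hNT hMNT, Set.sdiff_union_of_subset hTN]

theorem wellIndumatched_awayFrom [Finite V] (hG : WellIndumatched G)
    (hT : IsInducedMatching G T) : WellIndumatched (awayFrom G T) := by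
  have hcard : ∀ M, IsMaximalInducedMatching (awayFrom G T) M →
      (M ∪ T).ncard = M.ncard + T.ncard := fun M hM ↦
    Set.ncard_union_eq (disjoint_of_forall_not_edgesConflict (isInducedMatching_awayFrom.mp hM.1).2)
  intro M N hM hN
  have := hG _ _ (hM.union_of_awayFrom hT) (hN.union_of_awayFrom hT)
  rw [hcard M hM, hcard N hN] at this
  exact Nat.add_right_cancel this

end Link

section GirthCycle

variable {V : Type*} {G : SimpleGraph V}

theorem eq_of_isPath_of_length_add_length_lt_egirth {u v : V} {p q : G.Walk u v} (hp : p.IsPath)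
    (hq : q.IsPath) (hpq : (p.length + q.length : ℕ) < G.egirth) : p = q := by
  classical
  let S : Finset (Sym2 V) := p.edges.toFinset ∪ q.edges.toFinset
  let H : SimpleGraph V := fromEdgeSet S
  have hHG : H ≤ G := by
    rw [← edgeSet_subset_edgeSet, edgeSet_fromEdgeSet]
    intro e he
    rcases Finset.mem_union.mp he.1 with he | he
    · exact p.edges_subset_edgeSet (List.mem_toFinset.mp he)
    · exact q.edges_subset_edgeSet (List.mem_toFinset.mp he)
  have hHS : ∀ e ∈ H.edgeSet, e ∈ S := fun e he ↦ by
    rw [edgeSet_fromEdgeSet] at he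
    exact he.1
  have hS : S.card ≤ p.length + q.length := by
    grw [Finset.card_union_le, List.toFinset_card_le, List.toFinset_card_le, Walk.length_edges,
      Walk.length_edges]
  have hH : H.IsAcyclic := by
    intro a w hw
    have hwS : w.length ≤ S.card := by
      rw [← w.length_edges, ← List.toFinset_card_of_nodup hw.edges_nodup]
      exact Finset.card_le_card fun e he ↦
        hHS e (w.edges_subset_edgeSet (List.mem_toFinset.mp he))
    have hGw := egirth_le_length (hw.mapLe hHG)
    rw [Walk.length_mapLe] at hGw
    exact (hpq.trans_le hGw).not_ge (by exact_mod_cast hwS.trans hS)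
  have hpH : ∀ e ∈ p.edges, e ∈ H.edgeSet := fun e he ↦ by
    rw [edgeSet_fromEdgeSet]
    exact ⟨by simp [S, he], G.not_isDiag_of_mem_edgeSet (p.edges_subset_edgeSet he)⟩
  have hqH : ∀ e ∈ q.edges, e ∈ H.edgeSet := fun e he ↦ by
    rw [edgeSet_fromEdgeSet]
    exact ⟨by simp [S, he], G.not_isDiag_of_mem_edgeSet (q.edges_subset_edgeSet he)⟩
  have htransfer : p.transfer H hpH = q.transfer H hqH :=
    congrArg Subtype.val ((hH.subsingleton_path u v).elim ⟨_, hp.transfer hpH⟩ ⟨_, hq.transfer hqH⟩)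
  apply Walk.ext_support
  rw [← p.support_transfer hpH, htransfer, q.support_transfer hqH]

/-- `c` runs around a cycle of `G` of length `n`, and `G` has no shorter cycle. -/
structure IsGirthCycle (G : SimpleGraph V) {n : ℕ} (c : ZMod n → V) : Prop where
  injective : Function.Injective c
  adj_add_one : ∀ i, G.Adj (c i) (c (i + 1))
  le_egirth : n ≤ G.egirth

theorem exists_isGirthCycle (hG : ¬ G.IsAcyclic) :
    ∃ c : ZMod G.girth → V, IsGirthCycle G c := by
  obtain ⟨a, w, hw, hlen⟩ := exists_girth_eq_length.mpr hG
  have hle : (G.girth : ℕ∞) ≤ G.egirth := G.egirth.natCast_toNat_le_self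
  have : NeZero G.girth := ⟨by have := three_le_girth hG; omega⟩
  have hcast : ∀ m ≤ G.girth, w.getVert (m : ZMod G.girth).val = w.getVert m := by
    intro m hm
    rcases hm.lt_or_eq with hm | rfl
    · rw [ZMod.val_cast_of_lt hm]
    · rw [ZMod.natCast_self, ZMod.val_zero, w.getVert_zero, hlen, w.getVert_length]
  refine ⟨fun i ↦ w.getVert i.val, fun i j hij ↦ ?_, fun i ↦ ?_, hle⟩
  · have hi := i.val_lt
    have hj := j.val_lt
    exact ZMod.val_injective _ (hw.getVert_injOn' (by simp; omega) (by simp; omega) hij)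
  · have hi := i.val_lt
    have hsucc := hcast (i.val + 1) hi
    rw [Nat.cast_add_one, ZMod.natCast_zmod_val] at hsucc
    rw [hsucc]
    exact w.adj_getVert_succ (by omega)

namespace IsGirthCycle

variable {n : ℕ} {c : ZMod n → V} {i j : ZMod n}

theorem of_le {H : SimpleGraph V} (hc : IsGirthCycle G c) (hH : H ≤ G)
    (hadj : ∀ i, H.Adj (c i) (c (i + 1))) : IsGirthCycle H c :=
  ⟨hc.injective, hadj, hc.le_egirth.trans (egirth_anti hH)⟩

theorem exists_walk_support_eq (hc : IsGirthCycle G c) (i : ZMod n) (k : ℕ) :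
    ∃ p : G.Walk (c i) (c (i + k)), p.support = (List.range (k + 1)).map fun m : ℕ ↦ c (i + m) := by
  induction k with
  | zero => exact ⟨Walk.nil.copy rfl (by simp), by simp⟩
  | succ k ih =>
    obtain ⟨p, hp⟩ := ih
    have hadj : G.Adj (c (i + k)) (c (i + (k + 1 : ℕ))) := by
      rw [Nat.cast_add_one, ← add_assoc]
      exact hc.adj_add_one _
    refine ⟨p.concat hadj, ?_⟩
    rw [Walk.support_concat, hp, List.range_succ (n := k + 1), List.map_append,
      List.map_singleton]

theorem exists_isPath_add (hc : IsGirthCycle G c) (i : ZMod n) {k : ℕ} (hk : k < n) :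
    ∃ p : G.Walk (c i) (c (i + k)),
      p.IsPath ∧ p.length = k ∧ ∀ v ∈ p.support, v ∈ Set.range c := by
  obtain ⟨p, hp⟩ := hc.exists_walk_support_eq i k
  refine ⟨p, .mk' (hp ▸ List.nodup_range.map_on ?_), ?_, fun v hv ↦ ?_⟩
  · intro a ha b hb hab
    rw [List.mem_range] at ha hb
    have := add_left_cancel (hc.injective hab)
    rwa [ZMod.natCast_eq_natCast_iff', Nat.mod_eq_of_lt (by omega),
      Nat.mod_eq_of_lt (by omega)] at this
  · simpa using congrArg List.length hp
  · obtain ⟨m, -, rfl⟩ := List.mem_map.mp (hp ▸ hv)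
    exact ⟨_, rfl⟩

theorem exists_isPath_of_le_half [NeZero n] (hc : IsGirthCycle G c) (i j : ZMod n) :
    ∃ k ≤ n / 2, (j = i + k ∨ i = j + k) ∧ ∃ p : G.Walk (c i) (c j),
      p.IsPath ∧ p.length = k ∧ ∀ v ∈ p.support, v ∈ Set.range c := by
  obtain ⟨k, hk, hij⟩ : ∃ k ≤ n / 2, j = i + (k : ℕ) ∨ i = j + (k : ℕ) := by
    refine ⟨_, (j - i).natAbs_valMinAbs_le, ?_⟩
    rw [(j - i).natCast_natAbs_valMinAbs]
    split_ifs <;> simp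
  have hkn : k < n := hk.trans_lt (Nat.div_lt_self (NeZero.pos n) one_lt_two)
  refine ⟨k, hk, hij, ?_⟩
  rcases hij with rfl | rfl
  · exact hc.exists_isPath_add i hkn
  · obtain ⟨p, hp, hlen, hsupp⟩ := hc.exists_isPath_add j hkn
    exact ⟨p.reverse, hp.reverse, by simpa using hlen, by simpa using hsupp⟩

theorem adj_iff (hc : IsGirthCycle G c) (hn : 3 ≤ n) :
    G.Adj (c i) (c j) ↔ j = i + 1 ∨ i = j + 1 := by
  have : NeZero n := ⟨by omega⟩
  refine ⟨fun h ↦ ?_, ?_⟩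
  · obtain ⟨k, hk, hij, p, hp, hlen, -⟩ := hc.exists_isPath_of_le_half i j
    have heq : p = h.toWalk := eq_of_isPath_of_length_add_length_lt_egirth hp (.of_adj h)
      (lt_of_lt_of_le (by exact_mod_cast show p.length + 1 < n by omega) hc.le_egirth)
    obtain rfl : 1 = k := by simpa [heq] using hlen
    simpa using hij
  · rintro (rfl | rfl)
    · exact hc.adj_add_one i
    · exact (hc.adj_add_one j).symm

end IsGirthCycle

/-- `x` is a neighbour of `c i` off the cycle `c`. -/
def IsHair (G : SimpleGraph V) {n : ℕ} (c : ZMod n → V) (i : ZMod n) (x : V) : Prop :=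
  x ∉ Set.range c ∧ G.Adj (c i) x

/-- `c i, x, y` is a path of length two leaving the cycle `c` at `c i`. -/
def IsBranch (G : SimpleGraph V) {n : ℕ} (c : ZMod n → V) (i : ZMod n) (x y : V) : Prop :=
  IsHair G c i x ∧ G.Adj x y ∧ y ≠ c i

namespace IsGirthCycle

variable {n : ℕ} {c : ZMod n → V} {i j : ZMod n} {x x' y : V}

/-- The walk `r` follows the cycle, so its length is at most `n / 2`: a different short path
`q` would close a cycle of length less than `n`. -/
theorem eq_cons_of_isHair (hc : IsGirthCycle G c) (hx : IsHair G c i x)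
    {q : G.Walk x (c j)} (hq : q.IsPath) (hlen : q.length + n / 2 + 1 < n) :
    ∃ r : G.Walk (c i) (c j), (∀ v ∈ r.support, v ∈ Set.range c) ∧ q = .cons hx.2.symm r := by
  have : NeZero n := ⟨by omega⟩
  obtain ⟨k, hk, -, r, hr, hrlen, hsupp⟩ := hc.exists_isPath_of_le_half i j
  refine ⟨r, hsupp, eq_of_isPath_of_length_add_length_lt_egirth hq
    (hr.cons fun h ↦ hx.1 (hsupp x h)) (lt_of_lt_of_le ?_ hc.le_egirth)⟩
  rw [Walk.length_cons]
  exact_mod_cast (by omega)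

theorem mem_range_of_mem_support (hc : IsGirthCycle G c) (hx : IsHair G c i x)
    {q : G.Walk x (c j)} (hq : q.IsPath) (hlen : q.length + n / 2 + 1 < n) (hy : y ∈ q.support)
    (hyx : y ≠ x) : y ∈ Set.range c := by
  obtain ⟨r, hr, rfl⟩ := hc.eq_cons_of_isHair hx hq hlen
  rw [Walk.support_cons, List.mem_cons] at hy
  exact hr y (hy.resolve_left hyx)

theorem eq_of_isHair_of_adj (hc : IsGirthCycle G c) (hn : 5 ≤ n) (hx : IsHair G c i x)
    (hjx : G.Adj (c j) x) : i = j := by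
  obtain ⟨r, -, hr⟩ := hc.eq_cons_of_isHair hx (.of_adj hjx.symm)
    (by simp only [Walk.length_cons, Walk.length_nil]; omega)
  have hlen : r.length = 0 := by simpa using (congrArg Walk.length hr).symm
  exact hc.injective (r.eq_of_length_eq_zero hlen)

theorem not_adj_of_isHair (hc : IsGirthCycle G c) (hn : 7 ≤ n) (hx : IsHair G c i x)
    (hy : IsHair G c j y) : ¬ G.Adj x y := fun hxy ↦ by
  have hxj : x ≠ c j := fun h ↦ hx.1 ⟨j, h.symm⟩
  refine hy.1 (hc.mem_range_of_mem_support hx (q := .cons hxy hy.2.symm.toWalk) ?_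
    (by simp only [Walk.length_cons, Walk.length_nil]; omega) (by simp) hxy.ne')
  simp [Walk.cons_isPath_iff, hxj, hxy.ne, hy.2.ne']

theorem eq_of_isHair_of_common_neighbor (hc : IsGirthCycle G c) (hn : 9 ≤ n)
    (hx : IsHair G c i x) (hx' : IsHair G c j x') (hxy : G.Adj x y) (hyx' : G.Adj y x')
    (hy : y ∉ Set.range c) : x' = x := by
  by_contra hne
  have hxj : x ≠ c j := fun h ↦ hx.1 ⟨j, h.symm⟩
  have hyj : y ≠ c j := fun h ↦ hy ⟨j, h.symm⟩
  refine hy (hc.mem_range_of_mem_support hx (q := .cons hxy (.cons hyx' hx'.2.symm.toWalk)) ?_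
    (by simp only [Walk.length_cons, Walk.length_nil]; omega) (by simp) hxy.ne')
  simp [Walk.cons_isPath_iff, hxj, hyj, hxy.ne, hyx'.ne, Ne.symm hne, hx'.2.ne']

end IsGirthCycle

end GirthCycle

section HairyCycle

variable {V : Type*} {G : SimpleGraph V} {n : ℕ} {c : ZMod n → V} {i j : ZMod n}
  {x x' y y' : V} {e : Sym2 V}

/-- Up to isolated vertices, `G` consists of the induced cycle `c` together with pairwise disjoint
trees, each attached at a vertex of `c` and of depth at most two. The field `exists_touches` encodes
that nothing else carries an edge. -/
structure HairyCycle (G : SimpleGraph V) {n : ℕ} (c : ZMod n → V) : Prop where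
  injective : Function.Injective c
  adj_iff : ∀ {i j}, G.Adj (c i) (c j) ↔ j = i + 1 ∨ i = j + 1
  root_unique : ∀ {i j x}, IsHair G c i x → G.Adj (c j) x → i = j
  hairs_not_adj : ∀ {i j x y}, IsHair G c i x → IsHair G c j y → ¬ G.Adj x y
  tip_adj : ∀ {i x y z}, IsBranch G c i x y → G.Adj y z → z = x
  exists_touches : ∀ e ∈ G.edgeSet, ∃ i, EdgeTouches G e (c i)

theorem IsGirthCycle.hairyCycle (hc : IsGirthCycle G c) (hn : 9 ≤ n)
    (htouch : ∀ e ∈ G.edgeSet, ∃ i, EdgeTouches G e (c i)) : HairyCycle G c where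
  injective := hc.injective
  adj_iff := hc.adj_iff (by omega)
  root_unique := hc.eq_of_isHair_of_adj (by omega)
  hairs_not_adj := hc.not_adj_of_isHair (by omega)
  exists_touches := htouch
  tip_adj := by
    rintro i x y z ⟨hx, hxy, hyi⟩ hyz
    have hy : y ∉ Set.range c := by
      rintro ⟨j, rfl⟩
      exact hyi (congrArg c (hc.eq_of_isHair_of_adj (by omega) hx hxy.symm)).symm
    have hyc : ∀ j, ¬ G.Adj y (c j) := fun j h ↦ hc.not_adj_of_isHair (by omega) hx ⟨hy, h.symm⟩ hxy
    have hz : z ∉ Set.range c := by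
      rintro ⟨j, rfl⟩
      exact hyc j hyz
    obtain ⟨j, hj⟩ := htouch s(y, z) hyz
    rcases edgeTouches_mk.mp hj with (rfl | h) | rfl | h
    · exact absurd ⟨j, rfl⟩ hy
    · exact absurd h (hyc j)
    · exact absurd ⟨j, rfl⟩ hz
    · exact hc.eq_of_isHair_of_common_neighbor hn hx ⟨hz, h.symm⟩ hxy hyz hy

theorem WellIndumatched.exists_hairyCycle [Finite V] (hG : WellIndumatched G) (hn : 9 ≤ n)
    (hc : IsGirthCycle G c) : ∃ H : SimpleGraph V, WellIndumatched H ∧ HairyCycle H c := by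
  obtain ⟨T, -, hT⟩ := (Set.toFinite {T | IsInducedMatching G T ∧
    ∀ t ∈ T, ∀ i, ¬ EdgeTouches G t (c i)}).exists_le_maximal (a := ∅)
      ⟨⟨Set.empty_subset _, by simp⟩, by simp⟩
  obtain ⟨hTG, hTc⟩ := hT.prop
  have hcH : ∀ i, (awayFrom G T).Adj (c i) (c (i + 1)) := fun i ↦ by
    refine (mem_edgeSet_awayFrom (e := s(_, _))).mpr ⟨hc.adj_add_one i, fun t ht h ↦ ?_⟩
    rcases edgesConflict_mk.mp h.symm with h | h
    exacts [hTc t ht _ h, hTc t ht _ h]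
  refine ⟨awayFrom G T, wellIndumatched_awayFrom hG hTG,
    (hc.of_le (awayFrom_le T) hcH).hairyCycle hn ?_⟩
  intro e he
  by_contra! hetouch
  obtain ⟨heG, heT⟩ := mem_edgeSet_awayFrom.mp he
  have hec : ∀ i, ¬ EdgeTouches G e (c i) := by
    rintro i ⟨u, hu, h⟩
    exact hetouch i ⟨u, hu, h.imp_right
      (awayFrom_adj_of_mem_edges he (hcH i) hu (Sym2.mem_mk_left _ _)).mpr⟩
  have heT' : IsInducedMatching G ({e} ∪ T) ∧ ∀ t ∈ {e} ∪ T, ∀ i, ¬ EdgeTouches G t (c i) :=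
    ⟨(isInducedMatching_singleton heG).union_s13 hTG (by simpa using heT), by
      rintro t (rfl | ht)
      exacts [hec, hTc t ht]⟩
  exact heT e (hT.le_of_ge heT' Set.subset_union_right (Or.inl rfl)) (.refl e)

/-- The edge of the cycle `c` joining `c i` to its successor. -/
def cycleEdge {n : ℕ} (c : ZMod n → V) (i : ZMod n) : Sym2 V :=
  s(c i, c (i + 1))

namespace HairyCycle

theorem cycleEdge_mem_edgeSet (hc : HairyCycle G c) (i : ZMod n) : cycleEdge c i ∈ G.edgeSet :=
  hc.adj_iff.mpr (.inl rfl)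

theorem edgesConflict_cycleEdge_of_mem (hc : HairyCycle G c) (hj : c j ∈ e)
    (hij : j - i ∈ ({-1, 0, 1, 2} : Finset (ZMod n))) : EdgesConflict G e (cycleEdge c i) := by
  simp only [Finset.mem_insert, Finset.mem_singleton, sub_eq_iff_eq_add] at hij
  refine edgesConflict_mk.mpr ?_
  rcases hij with rfl | rfl | rfl | rfl
  · exact .inl (.of_adj hj (hc.adj_iff.mpr (.inl (by ring))))
  · exact .inl (.of_mem (by simpa using hj))
  · exact .inr (.of_mem (add_comm 1 i ▸ hj))
  · exact .inr (.of_adj hj (hc.adj_iff.mpr (.inr (by ring))))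

theorem edgesConflict_cycleEdge (hc : HairyCycle G c) :
    EdgesConflict G (cycleEdge c i) (cycleEdge c j) ↔
      j - i ∈ ({-2, -1, 0, 1, 2} : Finset (ZMod n)) := by
  simp only [Finset.mem_insert, Finset.mem_singleton, cycleEdge, edgesConflict_mk,
    edgeTouches_mk, hc.adj_iff, hc.injective.eq_iff]
  grind (splits := 20)

theorem edgesConflict_hair (hc : HairyCycle G c) (hx : IsHair G c i x) (hy : IsHair G c j y) :
    EdgesConflict G s(c i, x) s(c j, y) ↔ j - i ∈ ({-1, 0, 1} : Finset (ZMod n)) := by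
  have hxc : ∀ k, x ≠ c k := fun k h ↦ hx.1 ⟨k, h.symm⟩
  have hyc : ∀ k, c k ≠ y := fun k h ↦ hy.1 ⟨k, h⟩
  have hiy : G.Adj (c i) y → j = i := hc.root_unique hy
  have hjx : G.Adj x (c j) → j = i := fun h ↦ (hc.root_unique hx h.symm).symm
  have hxy : x = y → j = i := fun h ↦ hc.root_unique hy (h ▸ hx.2)
  simp only [Finset.mem_insert, Finset.mem_singleton, edgesConflict_mk, edgeTouches_mk, hc.adj_iff,
    hc.injective.eq_iff, hxc, hyc, hc.hairs_not_adj hx hy]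
  grind

theorem tip_notMem_range (hc : HairyCycle G c) (h : IsBranch G c i x y) : y ∉ Set.range c := by
  rintro ⟨j, rfl⟩
  exact h.2.2 (congrArg c (hc.root_unique h.1 h.2.1.symm)).symm

theorem edgeTouches_branch (hc : HairyCycle G c) (h : IsBranch G c i x y) :
    EdgeTouches G s(x, y) (c j) ↔ j = i := by
  refine ⟨fun hj ↦ ?_, fun hj ↦ .of_adj (Sym2.mem_mk_left _ _) (hj ▸ h.1.2.symm)⟩
  rcases edgeTouches_mk.mp hj with (hx | hx) | hy | hy
  · exact absurd ⟨j, hx.symm⟩ h.1.1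
  · exact (hc.root_unique h.1 hx.symm).symm
  · exact absurd ⟨j, hy.symm⟩ (hc.tip_notMem_range h)
  · exact absurd ⟨j, hc.tip_adj h hy⟩ h.1.1

theorem mem_of_tip_mem (hc : HairyCycle G c) (h : IsBranch G c i x y) (he : e ∈ G.edgeSet)
    (hy : y ∈ e) : x ∈ e := by
  obtain ⟨z, rfl⟩ := hy
  exact hc.tip_adj h he ▸ Sym2.mem_mk_right _ _

theorem edgeTouches_of_edgesConflict_branch (hc : HairyCycle G c) (h : IsBranch G c i x y)
    (he : e ∈ G.edgeSet) (hconf : EdgesConflict G e s(x, y)) : EdgeTouches G e (c i) := by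
  have of_mem_hair (hx : x ∈ e) : EdgeTouches G e (c i) := .of_adj hx h.1.2.symm
  obtain ⟨u, hu, rfl | hux⟩ | ⟨u, hu, rfl | huy⟩ := edgesConflict_mk.mp hconf
  · exact of_mem_hair hu
  · by_cases hui : u = c i
    · exact .of_mem (hui ▸ hu)
    · exact of_mem_hair (hc.mem_of_tip_mem ⟨h.1, hux.symm, hui⟩ he hu)
  · exact of_mem_hair (hc.mem_of_tip_mem h he hu)
  · exact of_mem_hair (hc.tip_adj h huy.symm ▸ hu)

theorem not_edgesConflict_branch (hc : HairyCycle G c) (h : IsBranch G c i x y)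
    (h' : IsBranch G c j x' y') (hij : i ≠ j) : ¬ EdgesConflict G s(x, y) s(x', y') := fun hconf ↦
  hij ((hc.edgeTouches_branch h).mp
    (hc.edgeTouches_of_edgesConflict_branch h' h.2.1 hconf)).symm

theorem edgesConflict_branch_cycleEdge (hc : HairyCycle G c) (h : IsBranch G c i x y) :
    EdgesConflict G s(x, y) (cycleEdge c j) ↔ j - i ∈ ({-1, 0} : Finset (ZMod n)) := by
  rw [cycleEdge, edgesConflict_mk, hc.edgeTouches_branch h, hc.edgeTouches_branch h,
    Finset.mem_insert, Finset.mem_singleton]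
  grind

theorem exists_mem_of_edgeTouches (hc : HairyCycle G c) (hi : ∀ x y, ¬ IsBranch G c i x y)
    (he : e ∈ G.edgeSet) (h : EdgeTouches G e (c i)) :
    ∃ j, c j ∈ e ∧ j - i ∈ ({-1, 0, 1} : Finset (ZMod n)) := by
  obtain ⟨u, hu, hui⟩ := h
  by_cases huc : u ∈ Set.range c
  · obtain ⟨j, rfl⟩ := huc
    rw [hc.injective.eq_iff, hc.adj_iff] at hui
    exact ⟨j, hu, by simp only [Finset.mem_insert, Finset.mem_singleton]; grind⟩
  · have hhair : IsHair G c i u := ⟨huc, (hui.resolve_left fun h ↦ huc ⟨i, h.symm⟩).symm⟩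
    obtain ⟨z, rfl⟩ := hu
    have hz : z = c i := by
      by_contra hz
      exact hi u z ⟨hhair, he, hz⟩
    exact ⟨i, hz ▸ Sym2.mem_mk_right _ _, by simp⟩

theorem not_isBranch_add_one [Finite V] (hc : HairyCycle G c) (hG : WellIndumatched G)
    (h : IsBranch G c i x y) : ¬ IsBranch G c (i + 1) x' y' := fun h' ↦ by
  have hne : i ≠ i + 1 := fun h ↦ (hc.adj_iff.mpr (.inl rfl)).ne (congrArg c h)
  have hle := hG.length_le_length (p := [cycleEdge c i]) (q := [s(x, y), s(x', y')])
    (by simp [hc.cycleEdge_mem_edgeSet]) (by simp) (by simp [h.2.1, h'.2.1])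
    (by simp [hc.not_edgesConflict_branch h h' hne]) fun e he b hb hconf ↦ by
      refine ⟨_, List.mem_singleton_self _, edgesConflict_mk.mpr ?_⟩
      simp only [List.mem_cons, List.not_mem_nil, or_false] at hb
      rcases hb with rfl | rfl
      · exact .inl (hc.edgeTouches_of_edgesConflict_branch h he hconf)
      · exact .inr (hc.edgeTouches_of_edgesConflict_branch h' he hconf)
  simp at hle

end HairyCycle

end HairyCycle

section Nonagon

variable {V : Type*} [Finite V] {G : SimpleGraph V} {c : ZMod 9 → V} {i : ZMod 9} {x y : V}

namespace HairyCycle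

theorem exists_isBranch_add_two (hc : HairyCycle G c) (hG : WellIndumatched G)
    (h : IsBranch G c i x y) : ∃ x' y', IsBranch G c (i + 2) x' y' := by
  by_contra! hnone
  have hidx : ∀ i j : ZMod 9, j - (i + 2) ∈ ({-1, 0, 1} : Finset (ZMod 9)) →
    j - i ∈ ({-1, 0, 1, 2} : Finset (ZMod 9)) ∨
      j - (i + 4) ∈ ({-1, 0, 1, 2} : Finset (ZMod 9)) := by decide
  have hle := hG.length_le_length (p := [cycleEdge c i, cycleEdge c (i + 4)])
    (q := [s(x, y), cycleEdge c (i + 1), cycleEdge c (i + 4)])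
    (by simp [hc.cycleEdge_mem_edgeSet]) (by simp +decide [hc.edgesConflict_cycleEdge])
    (by simp [hc.cycleEdge_mem_edgeSet, h.2.1])
    (by simp +decide [hc.edgesConflict_cycleEdge, hc.edgesConflict_branch_cycleEdge h])
    fun e he b hb hconf ↦ by
      simp only [List.mem_cons, List.not_mem_nil, or_false] at hb
      simp only [List.mem_cons, List.not_mem_nil, or_false, exists_eq_or_imp, exists_eq_left]
      rcases hb with rfl | rfl | rfl
      · exact .inl (edgesConflict_mk.mpr (.inl (hc.edgeTouches_of_edgesConflict_branch h he hconf)))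
      · rcases edgesConflict_mk.mp hconf with hconf | hconf
        · exact .inl (edgesConflict_mk.mpr (.inr hconf))
        · obtain ⟨j, hj, hji⟩ := hc.exists_mem_of_edgeTouches hnone he
            (by rwa [add_assoc, one_add_one_eq_two] at hconf)
          exact (hidx i j hji).imp (hc.edgesConflict_cycleEdge_of_mem hj)
            (hc.edgesConflict_cycleEdge_of_mem hj)
      · exact .inr hconf
  simp at hle

theorem not_isBranch (hc : HairyCycle G c) (hG : WellIndumatched G) : ¬ IsBranch G c i x y := by
  intro h
  have hmul : ∀ m : ℕ, ∃ x' y', IsBranch G c (i + m * 2) x' y' := by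
    intro m
    induction m with
    | zero => exact ⟨x, y, by simpa using h⟩
    | succ m ih =>
      obtain ⟨x', y', h'⟩ := ih
      rw [Nat.cast_succ, add_one_mul, ← add_assoc]
      exact hc.exists_isBranch_add_two hG h'
  obtain ⟨x', y', h'⟩ := hmul 5
  exact hc.not_isBranch_add_one hG h h'

theorem exists_mem_edge (hc : HairyCycle G c) (hG : WellIndumatched G) {e : Sym2 V}
    (he : e ∈ G.edgeSet) : ∃ j, c j ∈ e := by
  obtain ⟨i, hi⟩ := hc.exists_touches e he
  obtain ⟨j, hj, -⟩ := hc.exists_mem_of_edgeTouches (fun _ _ ↦ hc.not_isBranch hG) he hi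
  exact ⟨j, hj⟩

theorem exists_mem_edge_ne (hc : HairyCycle G c) (hG : WellIndumatched G) {e : Sym2 V}
    (he : e ∈ G.edgeSet) (hi : ∀ x, ¬ IsHair G c i x) : ∃ j ≠ i, c j ∈ e := by
  obtain ⟨j, hj⟩ := hc.exists_mem_edge hG he
  by_cases hji : j = i
  · subst hji
    obtain ⟨z, rfl⟩ := hj
    obtain ⟨k, rfl⟩ : z ∈ Set.range c := not_not.mp fun hz ↦ hi z ⟨hz, he⟩
    exact ⟨k, fun h ↦ he.ne' (congrArg c h), Sym2.mem_mk_right _ _⟩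
  · exact ⟨j, hji, hj⟩

theorem exists_isHair (hc : HairyCycle G c) (hG : WellIndumatched G) (i : ZMod 9) :
    ∃ x, IsHair G c i x := by
  by_contra! hnone
  have hidx : ∀ i j : ZMod 9, j ≠ i → j - (i + 2) ∈ ({-1, 0, 1, 2} : Finset (ZMod 9)) ∨
    j - (i + 6) ∈ ({-1, 0, 1, 2} : Finset (ZMod 9)) := by decide
  have hle := hG.length_le_length (p := [cycleEdge c (i + 2), cycleEdge c (i + 6)])
    (q := [cycleEdge c (i + 2), cycleEdge c (i + 5), cycleEdge c (i + 8)])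
    (by simp [hc.cycleEdge_mem_edgeSet]) (by simp +decide [hc.edgesConflict_cycleEdge])
    (by simp [hc.cycleEdge_mem_edgeSet]) (by simp +decide [hc.edgesConflict_cycleEdge])
    fun e he _ _ _ ↦ by
      obtain ⟨j, hji, hj⟩ := hc.exists_mem_edge_ne hG he hnone
      simp only [List.mem_cons, List.not_mem_nil, or_false, exists_eq_or_imp, exists_eq_left]
      exact (hidx i j hji).imp (hc.edgesConflict_cycleEdge_of_mem hj)
        (hc.edgesConflict_cycleEdge_of_mem hj)
  simp at hle

theorem not_wellIndumatched (hc : HairyCycle G c) : ¬ WellIndumatched G := fun hG ↦ by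
  choose x hx using hc.exists_isHair hG
  have hidx : ∀ j : ZMod 9, ∃ i ∈ [0, 3, 6], j - i ∈ ({-1, 0, 1, 2} : Finset (ZMod 9)) := by decide
  have hle := hG.length_le_length (p := [0, 3, 6].map (cycleEdge c))
    (q := [0, 2, 4, 6].map fun i ↦ s(c i, x i))
    (by simp [hc.cycleEdge_mem_edgeSet]) (by simp +decide [hc.edgesConflict_cycleEdge])
    (by simp [(hx _).2]) (by simp +decide [hc.edgesConflict_hair (hx _) (hx _)])
    fun e he _ _ _ ↦ by
      obtain ⟨j, hj⟩ := hc.exists_mem_edge hG he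
      obtain ⟨i, hi, hji⟩ := hidx j
      exact ⟨_, List.mem_map_of_mem hi, hc.edgesConflict_cycleEdge_of_mem hj hji⟩
  simp at hle

end HairyCycle

end Nonagon

/-- There is no well-indumatched graph of girth `9`. -/
theorem stmt_13 {V : Type*} [Fintype V] (G : SimpleGraph V) (hgirth : G.girth = 9) :
    ¬ WellIndumatched G := by
  intro hG
  have hcyclic : ¬ G.IsAcyclic := fun h ↦ by simp [girth_eq_zero.mpr h] at hgirth
  obtain ⟨c, hc⟩ : ∃ c : ZMod 9 → V, IsGirthCycle G c := hgirth ▸ exists_isGirthCycle hcyclic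
  obtain ⟨H, hH, hcH⟩ := hG.exists_hairyCycle le_rfl hc
  exact hcH.not_wellIndumatched hH
end
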